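/- arXiv:1711.07409 — 2 statements merged into one kernel-verified Lean document; each statement's English description precedes it below -/
import Mathlib

section
/- Every irreducible smooth TS-module V with V^S ≠ V is isomorphic, as a TS-module, to 𝕊 = C_c^∞(k^×). -/
noncomputable section

open scoped Classical

namespace PSW

/-! ### The affine group `λ.b : x ↦ λ·x + b` over a field `K`. -/

@[ext]
structure Aff (K : Type*) [Field K] where
  t : Kˣ
  s : K

namespace Aff

variable {K : Type*} [Field K]

instance : Mul (Aff K) := ⟨fun g h => ⟨g.t * h.t, g.s + (g.t : K) * h.s⟩⟩
instance : One (Aff K) := ⟨⟨1, 0⟩⟩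
instance : Inv (Aff K) := ⟨fun g => ⟨g.t⁻¹, -(((g.t⁻¹ : Kˣ) : K) * g.s)⟩⟩

@[simp] lemma mul_t (g h : Aff K) : (g * h).t = g.t * h.t := rfl
@[simp] lemma mul_s (g h : Aff K) : (g * h).s = g.s + (g.t : K) * h.s := rfl
@[simp] lemma one_t : (1 : Aff K).t = 1 := rfl
@[simp] lemma one_s : (1 : Aff K).s = 0 := rfl
@[simp] lemma inv_t (g : Aff K) : (g⁻¹).t = g.t⁻¹ := rfl
@[simp] lemma inv_s (g : Aff K) : (g⁻¹).s = -(((g.t⁻¹ : Kˣ) : K) * g.s) := rfl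

instance : Group (Aff K) where
  mul_assoc a b c := by
    ext
    · simp [mul_assoc]
    · simp only [mul_s, mul_t, Units.val_mul]; ring
  one_mul a := by ext <;> simp
  mul_one a := by ext <;> simp
  inv_mul_cancel a := by
    ext
    · simp
    · simp

/-- The element `x_λ` of the group `TS`. -/
def xT (u : Kˣ) : Aff K := ⟨u, 0⟩

/-- The element `s_b` of the group `TS`. -/
def sS (b : K) : Aff K := ⟨1, b⟩

@[simp] lemma xT_t (u : Kˣ) : (xT u : Aff K).t = u := rfl
@[simp] lemma xT_s (u : Kˣ) : (xT u : Aff K).s = 0 := rfl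
@[simp] lemma sS_t (b : K) : (sS b : Aff K).t = 1 := rfl
@[simp] lemma sS_s (b : K) : (sS b : Aff K).s = b := rfl

/-- `T ≅ k^×` as a subgroup of `TS`. -/
def xTHom : Kˣ →* Aff K where
  toFun := xT
  map_one' := rfl
  map_mul' u v := by ext <;> simp [xT]

@[simp] lemma xTHom_apply (u : Kˣ) : (xTHom u : Aff K) = xT u := rfl

lemma mul_sS (g : Aff K) (b : K) : g * sS b = sS ((g.t : K) * b) * g := by
  ext
  · simp
  · simp [add_comm]

lemma sS_mul (b : K) (g : Aff K) : sS b * g = g * sS (((g.t⁻¹ : Kˣ) : K) * b) := by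
  ext
  · simp
  · simp [Units.mul_inv_cancel_left, add_comm]

lemma aff_decomp (g : Aff K) : g = xT g.t * sS (((g.t⁻¹ : Kˣ) : K) * g.s) := by
  ext
  · simp
  · simp [Units.mul_inv_cancel_left]

instance [TopologicalSpace K] : TopologicalSpace (Aff K) :=
  TopologicalSpace.induced (fun g : Aff K => ((g.t, g.s) : Kˣ × K)) inferInstance

end Aff

/-! ### Generalities on representations of a monoid on complex vector spaces. -/

namespace GRep

variable {G : Type*} [Monoid G]

section MonoidModules

variable {V W : Type*} [AddCommMonoid V] [Module ℂ V] [AddCommMonoid W] [Module ℂ W]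

/-- A submodule invariant under the representation. -/
def Invariant (ρ : Representation ℂ G V) (U : Submodule ℂ V) : Prop :=
  ∀ (g : G) (v : V), v ∈ U → ρ g v ∈ U

/-- Equivariance of a linear map with respect to two representations. -/
def Equivariant (ρ : Representation ℂ G V) (σ : Representation ℂ G W) (f : V →ₗ[ℂ] W) : Prop :=
  ∀ (g : G) (v : V), f (ρ g v) = σ g (f v)

/-- Isomorphism of representations. -/
def Iso (ρ : Representation ℂ G V) (σ : Representation ℂ G W) : Prop :=
  ∃ e : V ≃ₗ[ℂ] W, ∀ (g : G) (v : V), e (ρ g v) = σ g (e v)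

/-- Irreducibility. -/
def Irred (ρ : Representation ℂ G V) : Prop :=
  Nontrivial V ∧ ∀ U : Submodule ℂ V, Invariant ρ U → U = ⊥ ∨ U = ⊤

/-- Subrepresentation on an invariant submodule. -/
def sub (ρ : Representation ℂ G V) {U : Submodule ℂ V} (hU : Invariant ρ U) :
    Representation ℂ G ↥U where
  toFun g := (ρ g).restrict fun v hv => hU g v hv
  map_one' := by
    apply LinearMap.ext; intro v; apply Subtype.ext
    simp [LinearMap.restrict_apply]
  map_mul' g h := by
    apply LinearMap.ext; intro v; apply Subtype.ext
    simp [LinearMap.restrict_apply]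

@[simp] lemma sub_apply (ρ : Representation ℂ G V) {U : Submodule ℂ V} (hU : Invariant ρ U)
    (g : G) (v : ↥U) : ((sub ρ hU g v : ↥U) : V) = ρ g (v : V) := rfl

lemma ker_invariant (ρ : Representation ℂ G V) (σ : Representation ℂ G W)
    (f : V →ₗ[ℂ] W) (hf : Equivariant ρ σ f) : Invariant ρ (LinearMap.ker f) := by
  intro g v hv
  rw [LinearMap.mem_ker] at hv ⊢
  rw [hf g v, hv, map_zero]

lemma range_invariant (ρ : Representation ℂ G V) (σ : Representation ℂ G W)
    (f : V →ₗ[ℂ] W) (hf : Equivariant ρ σ f) : Invariant σ (LinearMap.range f) := by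
  rintro g w ⟨v, rfl⟩
  exact ⟨ρ g v, hf g v⟩

lemma map_invariant (ρ : Representation ℂ G V) (σ : Representation ℂ G W)
    (f : V →ₗ[ℂ] W) (hf : Equivariant ρ σ f) (U : Submodule ℂ V) (hU : Invariant ρ U) :
    Invariant σ (U.map f) := by
  rintro g w ⟨v, hv, rfl⟩
  exact ⟨ρ g v, hU g v hv, hf g v⟩

end MonoidModules

section GroupModules

variable {V W : Type*} [AddCommGroup V] [Module ℂ V] [AddCommGroup W] [Module ℂ W]

/-- Quotient representation. -/
def quot (ρ : Representation ℂ G V) (U : Submodule ℂ V) (hU : Invariant ρ U) :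
    Representation ℂ G (V ⧸ U) where
  toFun g := U.mapQ U (ρ g) fun v hv => hU g v hv
  map_one' := by
    apply LinearMap.ext; intro x
    obtain ⟨v, rfl⟩ := Submodule.Quotient.mk_surjective U x
    simp [Submodule.mapQ_apply]
  map_mul' g h := by
    apply LinearMap.ext; intro x
    obtain ⟨v, rfl⟩ := Submodule.Quotient.mk_surjective U x
    simp [Submodule.mapQ_apply]

@[simp] lemma quot_apply (ρ : Representation ℂ G V) (U : Submodule ℂ V) (hU : Invariant ρ U)
    (g : G) (v : V) :
    quot ρ U hU g (Submodule.Quotient.mk v) = Submodule.Quotient.mk (ρ g v) := rfl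

/-- Subquotient representation on `B/A`. -/
def subquot (ρ : Representation ℂ G V) {A B : Submodule ℂ V}
    (hA : Invariant ρ A) (hB : Invariant ρ B) :
    Representation ℂ G (↥B ⧸ A.comap B.subtype) :=
  quot (sub ρ hB) (A.comap B.subtype) fun g v hv => hA g v.1 hv

lemma mkQ_equivariant (ρ : Representation ℂ G V) (U : Submodule ℂ V) (hU : Invariant ρ U) :
    Equivariant ρ (quot ρ U hU) U.mkQ := by
  intro g v
  show Submodule.Quotient.mk (ρ g v) = quot ρ U hU g (Submodule.Quotient.mk v)
  rw [quot_apply]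

end GroupModules

end GRep

/-! ### TS-modules: representations of the affine group. -/

/-- A `TS`-module structure on `V` is a representation of the group `TS ≅ Gl_a(1)`. -/
abbrev Rep (K : Type*) [Field K] (V : Type*) [AddCommGroup V] [Module ℂ V] :=
  Representation ℂ (Aff K) V

section RepDefs

open Aff

variable {K : Type*} [Field K]
variable {V W : Type*} [AddCommGroup V] [Module ℂ V] [AddCommGroup W] [Module ℂ W]

/-- Smoothness: every vector has open stabilizer. -/
def IsSmoothRep [TopologicalSpace K] (ρ : Rep K V) : Prop :=
  ∀ v : V, IsOpen {g : Aff K | ρ g v = v}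

/-- Smoothness of a `T`-module, i.e. of a representation of `T ≅ k^×`. -/
def TIsSmooth {X : Type*} [AddCommMonoid X] [Module ℂ X] [TopologicalSpace K]
    (τ : Representation ℂ Kˣ X) : Prop :=
  ∀ x : X, IsOpen {u : Kˣ | τ u x = x}

/-- Smooth character of `T ≅ k^×` (open kernel, equivalently locally constant). -/
def SmoothMulChar [TopologicalSpace K] (χ : Kˣ →* ℂˣ) : Prop :=
  IsOpen {u : Kˣ | χ u = 1}

/-- The space `V^S` of `S`-invariants. -/
def sInv (ρ : Rep K V) : Submodule ℂ V where
  carrier := {v | ∀ b : K, ρ (sS b) v = v}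
  zero_mem' := fun b => map_zero _
  add_mem' {a b} ha hb := fun c => by rw [map_add, ha c, hb c]
  smul_mem' c v hv := fun b => by rw [map_smul, hv b]

@[simp] lemma mem_sInv (ρ : Rep K V) (v : V) :
    v ∈ sInv ρ ↔ ∀ b : K, ρ (sS b) v = v := Iff.rfl

/-- The `χ`-eigenspace `X^{T,χ}` of a `T`-module. -/
def tEigenT {X : Type*} [AddCommMonoid X] [Module ℂ X]
    (τ : Representation ℂ Kˣ X) (χ : Kˣ →* ℂˣ) : Submodule ℂ X where
  carrier := {x | ∀ u : Kˣ, τ u x = (χ u : ℂ) • x}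
  zero_mem' := fun u => by simp
  add_mem' {a b} ha hb := fun u => by rw [map_add, ha u, hb u, smul_add]
  smul_mem' c x hx := fun u => by rw [map_smul, hx u]; exact smul_comm c ((χ u : ℂ)) x

@[simp] lemma mem_tEigenT {X : Type*} [AddCommMonoid X] [Module ℂ X]
    (τ : Representation ℂ Kˣ X) (χ : Kˣ →* ℂˣ) (x : X) :
    x ∈ tEigenT τ χ ↔ ∀ u : Kˣ, τ u x = (χ u : ℂ) • x := Iff.rfl

/-- The `χ`-eigenspace `V^{T,χ}` of a `TS`-module. -/
def tEigen (ρ : Rep K V) (χ : Kˣ →* ℂˣ) : Submodule ℂ V := tEigenT (ρ.comp xTHom) χ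

/-- The kernel of the projection to the `S`-coinvariants `V_S`. -/
def sCoinvKer (ρ : Rep K V) : Submodule ℂ V :=
  Submodule.span ℂ {w : V | ∃ (b : K) (v : V), w = ρ (sS b) v - v}

/-- The kernel of the projection to the twisted coinvariants `V_{S,ψ'}`. -/
def sTwistKer (ρ : Rep K V) (ψ' : AddChar K ℂ) : Submodule ℂ V :=
  Submodule.span ℂ {w : V | ∃ (b : K) (v : V), w = ρ (sS b) v - ψ' b • v}

/-- The kernel of the projection to the `χ`-coinvariants `X_{T,χ}` of a `T`-module. -/
def tTwistKerT {X : Type*} [AddCommGroup X] [Module ℂ X]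
    (τ : Representation ℂ Kˣ X) (χ : Kˣ →* ℂˣ) : Submodule ℂ X :=
  Submodule.span ℂ {w : X | ∃ (u : Kˣ) (x : X), w = τ u x - (χ u : ℂ) • x}

/-- The kernel of the projection to the `χ`-coinvariants `V_{T,χ}` of a `TS`-module. -/
def tTwistKer (ρ : Rep K V) (χ : Kˣ →* ℂˣ) : Submodule ℂ V := tTwistKerT (ρ.comp xTHom) χ

lemma sCoinvKer_invariant (ρ : Rep K V) : GRep.Invariant ρ (sCoinvKer ρ) := by
  intro g v hv
  have h : sCoinvKer ρ ≤ Submodule.comap (ρ g) (sCoinvKer ρ) := by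
    refine Submodule.span_le.2 ?_
    rintro w ⟨b, v', rfl⟩
    simp only [SetLike.mem_coe, Submodule.mem_comap, map_sub]
    have h1 : ρ g (ρ (sS b) v') = ρ (sS ((g.t : K) * b)) (ρ g v') := by
      rw [← Module.End.mul_apply, ← map_mul, mul_sS, map_mul, Module.End.mul_apply]
    rw [h1]
    exact Submodule.subset_span ⟨(g.t : K) * b, ρ g v', rfl⟩
  exact h hv

lemma sInv_invariant (ρ : Rep K V) : GRep.Invariant ρ (sInv ρ) := by
  intro g v hv
  rw [mem_sInv] at hv ⊢
  intro b
  have h1 : ρ (sS b) (ρ g v) = ρ g (ρ (sS (((g.t⁻¹ : Kˣ) : K) * b)) v) := by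
    rw [← Module.End.mul_apply, ← map_mul, sS_mul, map_mul, Module.End.mul_apply]
  rw [h1, hv _]

/-- The `S`-coinvariants `π₀(V) = V_S` as a `TS`-module (`S` acting trivially). -/
def piZeroRep (ρ : Rep K V) : Rep K (V ⧸ sCoinvKer ρ) :=
  GRep.quot ρ (sCoinvKer ρ) (sCoinvKer_invariant ρ)

/-- The `S`-coinvariants `π₀(V) = V_S` as a `T`-module. -/
def piZeroT (ρ : Rep K V) : Representation ℂ Kˣ (V ⧸ sCoinvKer ρ) :=
  (piZeroRep ρ).comp xTHom

/-- The `T`-module structure on `κ(V) = V^S`. -/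
def sInvT (ρ : Rep K V) : Representation ℂ Kˣ ↥(sInv ρ) :=
  (GRep.sub ρ (sInv_invariant ρ)).comp xTHom

/-- A `TS`-module is perfect if all its eigenspaces `V^{T,χ}` for smooth `χ` vanish. -/
def Perfect [TopologicalSpace K] (ρ : Rep K V) : Prop :=
  ∀ χ : Kˣ →* ℂˣ, SmoothMulChar χ → tEigen ρ χ = ⊥

/-- A finite-dimensional `T`-module is cyclic if each generalized eigenspace is a single
Jordan block; equivalently all eigenspaces `X^{T,χ}` have dimension at most one. -/
def TCyclic {X : Type*} [AddCommGroup X] [Module ℂ X]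
    (τ : Representation ℂ Kˣ X) : Prop :=
  ∀ χ : Kˣ →* ℂˣ, Module.finrank ℂ ↥(tEigenT τ χ) ≤ 1

lemma sCoinvKer_le_comap (ρ : Rep K V) (σ : Rep K W)
    (f : V →ₗ[ℂ] W) (hf : GRep.Equivariant ρ σ f) :
    sCoinvKer ρ ≤ (sCoinvKer σ).comap f := by
  refine Submodule.span_le.2 ?_
  rintro w ⟨b, v, rfl⟩
  simp only [SetLike.mem_coe, Submodule.mem_comap, map_sub]
  rw [hf]
  exact Submodule.subset_span ⟨b, f v, rfl⟩

/-- The map induced by an equivariant map on the `S`-coinvariants `π₀`. -/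
def piZeroMap (ρ : Rep K V) (σ : Rep K W) (f : V →ₗ[ℂ] W) (hf : GRep.Equivariant ρ σ f) :
    (V ⧸ sCoinvKer ρ) →ₗ[ℂ] (W ⧸ sCoinvKer σ) :=
  Submodule.mapQ _ _ f (sCoinvKer_le_comap ρ σ f hf)

lemma piZeroMap_equivariant (ρ : Rep K V) (σ : Rep K W) (f : V →ₗ[ℂ] W)
    (hf : GRep.Equivariant ρ σ f) :
    GRep.Equivariant (piZeroRep ρ) (piZeroRep σ) (piZeroMap ρ σ f hf) := by
  intro g x
  obtain ⟨v, rfl⟩ := Submodule.Quotient.mk_surjective _ x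
  show piZeroMap ρ σ f hf (piZeroRep ρ g (Submodule.Quotient.mk v))
      = piZeroRep σ g (piZeroMap ρ σ f hf (Submodule.Quotient.mk v))
  rw [show piZeroRep ρ g (Submodule.Quotient.mk v) = Submodule.Quotient.mk (ρ g v) from rfl]
  rw [show piZeroMap ρ σ f hf (Submodule.Quotient.mk v) = Submodule.Quotient.mk (f v) from rfl]
  rw [show piZeroMap ρ σ f hf (Submodule.Quotient.mk (ρ g v))
      = Submodule.Quotient.mk (f (ρ g v)) from rfl]
  rw [show piZeroRep σ g (Submodule.Quotient.mk (f v)) = Submodule.Quotient.mk (σ g (f v)) from rfl]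
  rw [hf]

lemma kappaImg_invariant (ρ : Rep K V) :
    GRep.Invariant (piZeroT ρ) ((sInv ρ).map (sCoinvKer ρ).mkQ) := by
  rintro u w ⟨v, hv, rfl⟩
  refine ⟨ρ (xT u) v, sInv_invariant ρ (xT u) v hv, ?_⟩
  rfl

end RepDefs

/-! ### Composition series and degree. -/

/-- A composition series for a `TS`-module, witnessing finite length: a maximal chain of
invariant submodules (the subquotients are then irreducible). -/
structure CompSeries {K : Type*} [Field K] {V : Type*} [AddCommGroup V] [Module ℂ V]
    (ρ : Rep K V) where
  n : ℕ
  W : ℕ → Submodule ℂ V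
  bot : W 0 = ⊥
  top : W n = ⊤
  inv : ∀ i, GRep.Invariant ρ (W i)
  lt : ∀ i < n, W i < W (i + 1)
  maximal : ∀ i < n, ∀ C : Submodule ℂ V, GRep.Invariant ρ C → W i ≤ C → C ≤ W (i + 1) →
    C = W i ∨ C = W (i + 1)

/-- The number of Jordan–Hölder constituents of a composition series isomorphic to a given
representation `σ` (applied with `σ = 𝕊`, this is the degree). -/
def CompSeries.deg {K : Type*} [Field K] {V : Type*} [AddCommGroup V] [Module ℂ V]
    {ρ : Rep K V} (c : CompSeries ρ) {W₀ : Type*} [AddCommMonoid W₀] [Module ℂ W₀]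
    (σ : Representation ℂ (Aff K) W₀) : ℕ :=
  (Finset.univ.filter fun i : Fin c.n =>
    GRep.Iso (GRep.subquot ρ (c.inv i.1) (c.inv (i.1 + 1))) σ).card

/-! ### Fiber products of a `T`-module with a `TS`-module over a `T`-module. -/

section Fiber

open Aff

variable {K : Type*} [Field K]
variable {X Y E : Type*} [AddCommGroup X] [Module ℂ X] [AddCommGroup Y] [Module ℂ Y]
  [AddCommGroup E] [Module ℂ E]

/-- The product `TS`-module `X × E` where `S` acts trivially on the `T`-module `X`. -/
def prodRepTE (τ : Representation ℂ Kˣ X) (ρ : Rep K E) : Rep K (X × E) where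
  toFun g := (τ g.t).prodMap (ρ g)
  map_one' := by
    apply LinearMap.ext; rintro ⟨x, v⟩
    simp
  map_mul' g h := by
    apply LinearMap.ext; rintro ⟨x, v⟩
    simp [map_mul]

/-- The underlying space of the fiber product `𝔼[f] = X ×_Y E`. -/
def fiberKer (f : X →ₗ[ℂ] Y) (q : E →ₗ[ℂ] Y) : Submodule ℂ (X × E) :=
  LinearMap.ker (f.comp (LinearMap.fst ℂ X E) - q.comp (LinearMap.snd ℂ X E))

lemma mem_fiberKer (f : X →ₗ[ℂ] Y) (q : E →ₗ[ℂ] Y) (p : X × E) :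
    p ∈ fiberKer f q ↔ f p.1 = q p.2 := by
  simp [fiberKer, sub_eq_zero]

lemma fiber_invariant (τX : Representation ℂ Kˣ X) (ρE : Rep K E)
    (τY : Representation ℂ Kˣ Y) (f : X →ₗ[ℂ] Y) (q : E →ₗ[ℂ] Y)
    (hf : ∀ (u : Kˣ) (x : X), f (τX u x) = τY u (f x))
    (hq : sCoinvKer ρE ≤ LinearMap.ker q)
    (hqT : ∀ (u : Kˣ) (v : E), q (ρE (xT u) v) = τY u (q v)) :
    GRep.Invariant (prodRepTE τX ρE) (fiberKer f q) := by
  intro g p hp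
  rw [mem_fiberKer] at hp ⊢
  have hsb : q (ρE (sS (((g.t⁻¹ : Kˣ) : K) * g.s)) p.2) = q p.2 := by
    have h1 : ρE (sS (((g.t⁻¹ : Kˣ) : K) * g.s)) p.2 - p.2 ∈ sCoinvKer ρE :=
      Submodule.subset_span ⟨_, _, rfl⟩
    have h2 := hq h1
    rw [LinearMap.mem_ker, map_sub, sub_eq_zero] at h2
    exact h2
  have hdecomp : ρE g p.2 = ρE (xT g.t) (ρE (sS (((g.t⁻¹ : Kˣ) : K) * g.s)) p.2) := by
    conv_lhs => rw [aff_decomp g]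
    rw [map_mul, Module.End.mul_apply]
  have h1 : ((prodRepTE τX ρE) g p).1 = τX g.t p.1 := rfl
  have h2 : ((prodRepTE τX ρE) g p).2 = ρE g p.2 := rfl
  rw [h1, h2, hf, hp, hdecomp, hqT, hsb]

end Fiber

/-! ### Jordan blocks of finite-dimensional `T`-modules. -/

section Jordan

variable {K : Type*} [Field K]
variable {X : Type*} [AddCommGroup X] [Module ℂ X]

/-- A Jordan block of a `T`-module: a nonzero indecomposable invariant direct summand. -/
def IsJordanBlock (τ : Representation ℂ Kˣ X) (J : Submodule ℂ X) : Prop :=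
  J ≠ ⊥ ∧ GRep.Invariant τ J ∧ (∃ C : Submodule ℂ X, GRep.Invariant τ C ∧ IsCompl J C) ∧
    ∀ A B : Submodule ℂ X, GRep.Invariant τ A → GRep.Invariant τ B → A ≤ J → B ≤ J →
      A ⊓ B = ⊥ → A ⊔ B = J → A = ⊥ ∨ B = ⊥

end Jordan

/-! ### Invariants and coinvariants for a normal subgroup of an arbitrary group. -/

section Grp

variable {Γ : Type*} [Group Γ]
variable {V W : Type*} [AddCommGroup V] [Module ℂ V] [AddCommGroup W] [Module ℂ W]

/-- Invariants `V^N` under a subgroup `N`. -/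
def grpInv (ρ : Representation ℂ Γ V) (N : Subgroup Γ) : Submodule ℂ V where
  carrier := {v | ∀ n ∈ N, ρ n v = v}
  zero_mem' := fun n _ => map_zero _
  add_mem' {a b} ha hb := fun n hn => by rw [map_add, ha n hn, hb n hn]
  smul_mem' c v hv := fun n hn => by rw [map_smul, hv n hn]

@[simp] lemma mem_grpInv (ρ : Representation ℂ Γ V) (N : Subgroup Γ) (v : V) :
    v ∈ grpInv ρ N ↔ ∀ n ∈ N, ρ n v = v := Iff.rfl

/-- The kernel of the projection to the coinvariants `V_N` under a subgroup `N`. -/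
def grpCoinvKer (ρ : Representation ℂ Γ V) (N : Subgroup Γ) : Submodule ℂ V :=
  Submodule.span ℂ {w : V | ∃ n ∈ N, ∃ v : V, w = ρ n v - v}

lemma grpInv_invariant (ρ : Representation ℂ Γ V) (N : Subgroup Γ) [hN : N.Normal] :
    GRep.Invariant ρ (grpInv ρ N) := by
  intro γ v hv
  rw [mem_grpInv] at hv ⊢
  intro n hn
  have hmem : γ⁻¹ * n * γ ∈ N := by
    have := hN.conj_mem n hn γ⁻¹
    simpa using this
  have key : ρ n (ρ γ v) = ρ γ (ρ (γ⁻¹ * n * γ) v) := by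
    rw [← Module.End.mul_apply, ← map_mul, ← Module.End.mul_apply, ← map_mul]
    congr 1
    group
  rw [key, hv _ hmem]

lemma grpCoinvKer_invariant (ρ : Representation ℂ Γ V) (N : Subgroup Γ) [hN : N.Normal] :
    GRep.Invariant ρ (grpCoinvKer ρ N) := by
  intro γ v hv
  have h : grpCoinvKer ρ N ≤ Submodule.comap (ρ γ) (grpCoinvKer ρ N) := by
    refine Submodule.span_le.2 ?_
    rintro w ⟨n, hn, v', rfl⟩
    simp only [SetLike.mem_coe, Submodule.mem_comap, map_sub]
    have key : ρ γ (ρ n v') = ρ (γ * n * γ⁻¹) (ρ γ v') := by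
      rw [← Module.End.mul_apply, ← map_mul, ← Module.End.mul_apply, ← map_mul]
      congr 1
      group
    rw [key]
    exact Submodule.subset_span ⟨γ * n * γ⁻¹, hN.conj_mem n hn γ, ρ γ v', rfl⟩
  exact h hv

/-- The map induced on `N`-invariants by an equivariant map. -/
def grpInvRestrict (ρ : Representation ℂ Γ V) (σ : Representation ℂ Γ W) (N : Subgroup Γ)
    (f : V →ₗ[ℂ] W) (hf : GRep.Equivariant ρ σ f) : ↥(grpInv ρ N) →ₗ[ℂ] ↥(grpInv σ N) :=
  f.restrict (fun v hv => by
    rw [mem_grpInv] at hv ⊢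
    intro n hn
    rw [← hf n v, hv n hn])

lemma grpCoinvKer_le_comap (ρ : Representation ℂ Γ V) (σ : Representation ℂ Γ W) (N : Subgroup Γ)
    (f : V →ₗ[ℂ] W) (hf : GRep.Equivariant ρ σ f) :
    grpCoinvKer ρ N ≤ (grpCoinvKer σ N).comap f := by
  refine Submodule.span_le.2 ?_
  rintro w ⟨n, hn, v, rfl⟩
  simp only [SetLike.mem_coe, Submodule.mem_comap, map_sub]
  rw [hf]
  exact Submodule.subset_span ⟨n, hn, f v, rfl⟩

/-- The map induced on `N`-coinvariants by an equivariant map. -/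
def grpCoinvMap (ρ : Representation ℂ Γ V) (σ : Representation ℂ Γ W) (N : Subgroup Γ)
    (f : V →ₗ[ℂ] W) (hf : GRep.Equivariant ρ σ f) :
    (V ⧸ grpCoinvKer ρ N) →ₗ[ℂ] (W ⧸ grpCoinvKer σ N) :=
  Submodule.mapQ _ _ f (grpCoinvKer_le_comap ρ σ N f hf)

end Grp

/-! ### Tate L-factors of finite-dimensional `T`-modules. -/

section Lfactor

variable {K : Type*} [NontriviallyNormedField K]
variable {X : Type*} [AddCommGroup X] [Module ℂ X]

/-- The part of a `T`-module where the `χ`-twisted action is unramified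
(trivial on the norm-one units). -/
def unrPart (τ : Representation ℂ Kˣ X) (χ : Kˣ →* ℂˣ) : Submodule ℂ X where
  carrier := {x | ∀ u : Kˣ, ‖(u : K)‖ = 1 → (χ u : ℂ) • τ u x = x}
  zero_mem' := fun u _ => by simp
  add_mem' {a b} ha hb := fun u hu => by rw [map_add, smul_add, ha u hu, hb u hu]
  smul_mem' c x hx := fun u hu => by
    rw [map_smul, smul_comm, hx u hu]

lemma unrPart_stable (τ : Representation ℂ Kˣ X) (χ : Kˣ →* ℂˣ) (ϖ : Kˣ) :
    ∀ x ∈ unrPart τ χ, ((χ ϖ : ℂ) • τ ϖ) x ∈ unrPart τ χ := by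
  intro x hx u hu
  have comm : τ u (τ ϖ x) = τ ϖ (τ u x) := by
    rw [← Module.End.mul_apply, ← map_mul, mul_comm, map_mul, Module.End.mul_apply]
  calc (χ u : ℂ) • τ u (((χ ϖ : ℂ) • τ ϖ) x)
      = (χ ϖ : ℂ) • ((χ u : ℂ) • τ u (τ ϖ x)) := by
        rw [LinearMap.smul_apply, map_smul, smul_comm]
    _ = (χ ϖ : ℂ) • τ ϖ ((χ u : ℂ) • τ u x) := by rw [comm, map_smul]
    _ = ((χ ϖ : ℂ) • τ ϖ) x := by rw [hx u hu, LinearMap.smul_apply]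

/-- The twisted uniformizer action on the unramified part. -/
def twistOp (τ : Representation ℂ Kˣ X) (χ : Kˣ →* ℂˣ) (ϖ : Kˣ) :
    ↥(unrPart τ χ) →ₗ[ℂ] ↥(unrPart τ χ) :=
  LinearMap.restrict ((χ ϖ : ℂ) • τ ϖ) (unrPart_stable τ χ ϖ)

/-- The Tate `L`-factor `L(s, χ ⊗ X) = det(1 - q^{-s}·(χ·τ)(ϖ) | X^{unr,χ})⁻¹` of a
(finite-dimensional) `T`-module `X`, relative to a uniformizer `ϖ`. -/
def Lfactor (τ : Representation ℂ Kˣ X) (χ : Kˣ →* ℂˣ) (ϖ : Kˣ) (s : ℂ) : ℂ :=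
  (LinearMap.det (LinearMap.id - (‖(ϖ : K)‖ : ℂ) ^ s • twistOp τ χ ϖ))⁻¹

end Lfactor

/-! ### The concrete `TS`-modules `𝕊`, `C_c^∞(k)`, `C_b^∞(k^×)` and `𝔼[χ]`. -/

section Concrete

open Aff

variable (K : Type*) [NontriviallyNormedField K]

/-- The representation of `TS` on functions on `k^×`:
`(s_b g)(x) = ψ(bx) g(x)`, `(x_λ g)(x) = g(xλ)`. -/
def repCx (ψ : AddChar K ℂ) : Rep K (Kˣ → ℂ) where
  toFun g :=
    { toFun := fun f x => ψ (g.s * (x : K)) * f (x * g.t)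
      map_add' := fun f₁ f₂ => by funext x; simp [mul_add]
      map_smul' := fun c f => by
        funext x
        simp only [Pi.smul_apply, smul_eq_mul, RingHom.id_apply]
        ring }
  map_one' := by
    apply LinearMap.ext; intro f; funext x
    simp
  map_mul' g h := by
    apply LinearMap.ext; intro f; funext x
    show ψ ((g.s + (g.t : K) * h.s) * (x : K)) * f (x * (g.t * h.t))
        = ψ (g.s * (x : K)) * (ψ (h.s * ((x * g.t : Kˣ) : K)) * f (x * g.t * h.t))
    have harg : (g.s + (g.t : K) * h.s) * (x : K)
        = g.s * (x : K) + h.s * ((x * g.t : Kˣ) : K) := by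
      push_cast
      ring
    rw [harg, AddChar.map_add_eq_mul, ← mul_assoc x g.t h.t]
    ring

@[simp] lemma repCx_apply (ψ : AddChar K ℂ) (g : Aff K) (f : Kˣ → ℂ) (x : Kˣ) :
    repCx K ψ g f x = ψ (g.s * (x : K)) * f (x * g.t) := rfl

/-- The `χ`-twisted representation of `TS` on functions on `k`:
`(s_b g)(x) = ψ(bx) g(x)`, `(x_λ g)(x) = χ(λ) g(xλ)`.  (Take `χ = 1` for the
untwisted action on `C_c^∞(k)`; the module `𝔼[χ]` is `C_c^∞(k)` with the twisted action.) -/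
def repCc (ψ : AddChar K ℂ) (χ : Kˣ →* ℂˣ) : Rep K (K → ℂ) where
  toFun g :=
    { toFun := fun f x => (χ g.t : ℂ) * ψ (g.s * x) * f (x * (g.t : K))
      map_add' := fun f₁ f₂ => by funext x; simp [mul_add]
      map_smul' := fun c f => by
        funext x
        simp only [Pi.smul_apply, smul_eq_mul, RingHom.id_apply]
        ring }
  map_one' := by
    apply LinearMap.ext; intro f; funext x
    simp
  map_mul' g h := by
    apply LinearMap.ext; intro f; funext x
    show (χ (g.t * h.t) : ℂ) * ψ ((g.s + (g.t : K) * h.s) * x) * f (x * ((g.t * h.t : Kˣ) : K))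
        = (χ g.t : ℂ) * ψ (g.s * x) * ((χ h.t : ℂ) * ψ (h.s * (x * (g.t : K)))
            * f (x * (g.t : K) * (h.t : K)))
    have harg : (g.s + (g.t : K) * h.s) * x = g.s * x + h.s * (x * (g.t : K)) := by ring
    have harg2 : x * ((g.t * h.t : Kˣ) : K) = x * (g.t : K) * (h.t : K) := by
      push_cast
      ring
    rw [harg, harg2, AddChar.map_add_eq_mul, map_mul]
    push_cast
    ring

@[simp] lemma repCc_apply (ψ : AddChar K ℂ) (χ : Kˣ →* ℂˣ) (g : Aff K) (f : K → ℂ) (x : K) :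
    repCc K ψ χ g f x = (χ g.t : ℂ) * ψ (g.s * x) * f (x * (g.t : K)) := rfl

/-- The one-dimensional `TS`-module `ℂ_χ` on which `S` acts trivially and `x_λ` by `χ(λ)`. -/
def chiRep (χ : Kˣ →* ℂˣ) : Rep K ℂ where
  toFun g := (χ g.t : ℂ) • LinearMap.id
  map_one' := by
    apply LinearMap.ext; intro c
    simp
  map_mul' g h := by
    apply LinearMap.ext; intro c
    simp only [mul_t, map_mul, LinearMap.smul_apply, LinearMap.id_apply, Module.End.mul_apply,
      Units.val_mul, smul_eq_mul]
    ring

/-- `C_c^∞(k)`: locally constant, compactly supported functions on `k`. -/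
def CcK : Submodule ℂ (K → ℂ) where
  carrier := {f | IsLocallyConstant f ∧ HasCompactSupport f}
  zero_mem' := ⟨IsLocallyConstant.const 0, by
    rw [hasCompactSupport_def]
    simp⟩
  add_mem' {a b} ha hb := ⟨ha.1.comp₂ hb.1 (· + ·), ha.2.add hb.2⟩
  smul_mem' c f hf := by
    refine ⟨?_, hf.2.mono (Function.support_const_smul_subset c f)⟩
    exact hf.1.comp (fun z => c * z)

@[simp] lemma mem_CcK (f : K → ℂ) :
    f ∈ CcK K ↔ IsLocallyConstant f ∧ HasCompactSupport f := Iff.rfl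

/-- `𝕊 = C_c^∞(k^×)`: locally constant, compactly supported functions on `k^×`. -/
def SSx : Submodule ℂ (Kˣ → ℂ) where
  carrier := {f | IsLocallyConstant f ∧ HasCompactSupport f}
  zero_mem' := ⟨IsLocallyConstant.const 0, by
    rw [hasCompactSupport_def]
    simp⟩
  add_mem' {a b} ha hb := ⟨ha.1.comp₂ hb.1 (· + ·), ha.2.add hb.2⟩
  smul_mem' c f hf := by
    refine ⟨?_, hf.2.mono (Function.support_const_smul_subset c f)⟩
    exact hf.1.comp (fun z => c * z)

@[simp] lemma mem_SSx (f : Kˣ → ℂ) :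
    f ∈ SSx K ↔ IsLocallyConstant f ∧ HasCompactSupport f := Iff.rfl

/-- `C_b^∞(k^×)`: locally constant functions on `k^×` whose support has compact closure
in `k`. -/
def Cb : Submodule ℂ (Kˣ → ℂ) where
  carrier := {f | IsLocallyConstant f ∧
    IsCompact (closure (((↑) : Kˣ → K) '' Function.support f))}
  zero_mem' := ⟨IsLocallyConstant.const 0, by simp⟩
  add_mem' {a b} ha hb := by
    refine ⟨ha.1.comp₂ hb.1 (· + ·), ?_⟩
    refine IsCompact.of_isClosed_subset (ha.2.union hb.2) isClosed_closure ?_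
    refine closure_minimal ?_ (ha.2.isClosed.union hb.2.isClosed)
    refine (Set.image_mono (Function.support_add _ _)).trans ?_
    rw [Set.image_union]
    exact Set.union_subset_union subset_closure subset_closure
  smul_mem' c f hf := by
    refine ⟨hf.1.comp (fun z => c * z), ?_⟩
    refine IsCompact.of_isClosed_subset hf.2 isClosed_closure ?_
    refine closure_mono ?_
    exact Set.image_mono (Function.support_const_smul_subset c f)

@[simp] lemma mem_Cb (f : Kˣ → ℂ) :
    f ∈ Cb K ↔ IsLocallyConstant f ∧
      IsCompact (closure (((↑) : Kˣ → K) '' Function.support f)) := Iff.rfl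

variable {K}

lemma SSx_invariant (ψ : AddChar K ℂ) (hψlc : IsLocallyConstant (⇑ψ)) :
    GRep.Invariant (repCx K ψ) (SSx K) := by
  rintro g f hf
  rw [mem_SSx] at hf ⊢
  obtain ⟨hlc, hcs⟩ := hf
  have heq : repCx K ψ g f
      = (fun x : Kˣ => ψ (g.s * (x : K))) * (f ∘ (Homeomorph.mulRight g.t)) := rfl
  constructor
  · rw [heq]
    refine IsLocallyConstant.mul ?_ ?_
    · exact hψlc.comp_continuous (continuous_const.mul Units.continuous_val)
    · exact hlc.comp_continuous (Homeomorph.mulRight g.t).continuous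
  · rw [heq]
    exact (hcs.comp_homeomorph (Homeomorph.mulRight g.t)).mul_left

lemma CcK_invariant (ψ : AddChar K ℂ) (hψlc : IsLocallyConstant (⇑ψ)) (χ : Kˣ →* ℂˣ) :
    GRep.Invariant (repCc K ψ χ) (CcK K) := by
  rintro g f hf
  rw [mem_CcK] at hf ⊢
  obtain ⟨hlc, hcs⟩ := hf
  have hne : ((g.t : Kˣ) : K) ≠ 0 := g.t.ne_zero
  have heq : repCc K ψ χ g f
      = (fun x : K => (χ g.t : ℂ) * ψ (g.s * x)) * (f ∘ (Homeomorph.mulRight₀ (g.t : K) hne)) :=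
    rfl
  constructor
  · rw [heq]
    refine IsLocallyConstant.mul ?_ ?_
    · exact ((hψlc.comp_continuous (continuous_const.mul continuous_id)).comp
        (fun z => (χ g.t : ℂ) * z))
    · exact hlc.comp_continuous (Homeomorph.mulRight₀ (g.t : K) hne).continuous
  · rw [heq]
    exact (hcs.comp_homeomorph (Homeomorph.mulRight₀ (g.t : K) hne)).mul_left

/-- The `TS`-module `𝕊 = C_c^∞(k^×)`. -/
def SRep (ψ : AddChar K ℂ) (hψlc : IsLocallyConstant (⇑ψ)) : Rep K ↥(SSx K) :=
  GRep.sub (repCx K ψ) (SSx_invariant ψ hψlc)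

/-- The `TS`-module `𝔼[χ]`, i.e. `C_c^∞(k)` with the `χ`-twisted action. -/
def ERep (ψ : AddChar K ℂ) (hψlc : IsLocallyConstant (⇑ψ)) (χ : Kˣ →* ℂˣ) : Rep K ↥(CcK K) :=
  GRep.sub (repCc K ψ χ) (CcK_invariant ψ hψlc χ)

/-- The `TS`-module `𝕊^s`, a direct sum of `s` copies of `𝕊`. -/
def SRepPow (ψ : AddChar K ℂ) (hψlc : IsLocallyConstant (⇑ψ)) (s : ℕ) :
    Rep K (Fin s → ↥(SSx K)) where
  toFun g := LinearMap.pi fun i => (SRep ψ hψlc g).comp (LinearMap.proj i)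
  map_one' := by
    apply LinearMap.ext; intro v; funext i
    simp
  map_mul' g h := by
    apply LinearMap.ext; intro v; funext i
    simp [map_mul]

/-- The submodule `E` of `C_b^∞(k^×)` consisting of functions which are `χ`-eigenvectors
modulo `𝕊`; the quotient `E/𝕊` is the `χ`-eigenspace of `C_b^∞(k^×)/𝕊`. -/
def quotEigen (ψ : AddChar K ℂ) (χ : Kˣ →* ℂˣ) : Submodule ℂ (Kˣ → ℂ) where
  carrier := {f | f ∈ Cb K ∧ ∀ u : Kˣ, repCx K ψ (Aff.xT u) f - (χ u : ℂ) • f ∈ SSx K}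
  zero_mem' := ⟨(Cb K).zero_mem, fun u => by simpa using (SSx K).zero_mem⟩
  add_mem' {a b} ha hb := by
    refine ⟨(Cb K).add_mem ha.1 hb.1, fun u => ?_⟩
    rw [map_add, smul_add, add_sub_add_comm]
    exact (SSx K).add_mem (ha.2 u) (hb.2 u)
  smul_mem' c f hf := by
    refine ⟨(Cb K).smul_mem c hf.1, fun u => ?_⟩
    rw [map_smul, smul_comm, ← smul_sub]
    exact (SSx K).smul_mem c (hf.2 u)

/-- Evaluation at `0 ∈ k`, realizing the quotient map `𝔼[χ] → ℂ_χ` with kernel `𝕊`. -/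
def ev0 : ↥(CcK K) →ₗ[ℂ] ℂ where
  toFun f := (f : K → ℂ) 0
  map_add' f g := rfl
  map_smul' c f := rfl

end Concrete

/-! ### The diagonal torus in GL(2). -/

section GL2

variable {K : Type*} [Field K]

/-- The diagonal element `diag(a, b)` of `GL(2, K)`. -/
def diagGL (a b : Kˣ) : Matrix.GeneralLinearGroup (Fin 2) K where
  val := Matrix.diagonal ![(a : K), (b : K)]
  inv := Matrix.diagonal ![((a : K))⁻¹, ((b : K))⁻¹]
  val_inv := by
    ext i j
    fin_cases i <;> fin_cases j <;>
      simp [Matrix.mul_apply, Fin.sum_univ_two, Matrix.diagonal, Matrix.one_apply,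
        a.ne_zero, b.ne_zero]
  inv_val := by
    ext i j
    fin_cases i <;> fin_cases j <;>
      simp [Matrix.mul_apply, Fin.sum_univ_two, Matrix.diagonal, Matrix.one_apply,
        a.ne_zero, b.ne_zero]

end GL2

section Helpers

open Aff MeasureTheory Metric Topology Filter

variable {K : Type*} [NontriviallyNormedField K] [IsUltrametricDist K] [ProperSpace K]
variable {V : Type*} [AddCommGroup V] [Module ℂ V]

set_option linter.unusedSectionVars false

def twR (ρ : Rep K V) (ψ : AddChar K ℂ) (a : K) (R : ℝ) : Submodule ℂ V :=
  Submodule.span ℂ {w : V | ∃ (b : K) (v : V), ‖b‖ ≤ R ∧ w = ρ (sS b) v - ψ (a * b) • v}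

lemma twR_mono (ρ : Rep K V) (ψ : AddChar K ℂ) (a : K) {R R' : ℝ} (h : R ≤ R') :
    twR ρ ψ a R ≤ twR ρ ψ a R' := by
  refine Submodule.span_mono ?_
  rintro w ⟨b, v, hb, rfl⟩
  exact ⟨b, v, hb.trans h, rfl⟩

lemma rho_sS_sS (ρ : Rep K V) (b c : K) (v : V) :
    ρ (sS b) (ρ (sS c) v) = ρ (sS (b + c)) v := by
  rw [← Module.End.mul_apply, ← map_mul]
  congr 2
  ext <;> simp

lemma rho_sS_zero (ρ : Rep K V) (v : V) : ρ (sS (0 : K)) v = v := by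
  have : (sS (0 : K)) = 1 := by ext <;> simp
  rw [this]; simp

lemma rho_xT_sS (ρ : Rep K V) (u : Kˣ) (c : K) (v : V) :
    ρ (xT u) (ρ (sS c) v) = ρ (sS ((u : K) * c)) (ρ (xT u) v) := by
  rw [← Module.End.mul_apply, ← map_mul, mul_sS, map_mul, Module.End.mul_apply]
  simp

lemma exists_twR_of_twist (ρ : Rep K V) (ψ : AddChar K ℂ) (h : sTwistKer ρ ψ = ⊤)
    (a : K) (ha : a ≠ 0) (v : V) : ∃ R, v ∈ twR ρ ψ a R := by
  set u : Kˣ := Units.mk0 a ha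
  have key : ∀ w ∈ sTwistKer ρ ψ, ∃ R, ρ (xT u⁻¹) w ∈ twR ρ ψ a R := by
    intro w hw
    unfold sTwistKer at hw
    induction hw using Submodule.span_induction with
    | mem x hx =>
      obtain ⟨b, v, rfl⟩ := hx
      refine ⟨‖a⁻¹ * b‖, Submodule.subset_span ⟨a⁻¹ * b, ρ (xT u⁻¹) v, le_rfl, ?_⟩⟩
      rw [map_sub, map_smul, rho_xT_sS, mul_inv_cancel_left₀ ha]
      simp [u]
    | zero => exact ⟨0, by simp⟩
    | add x y _ _ hx hy =>
      obtain ⟨R, hR⟩ := hx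
      obtain ⟨R', hR'⟩ := hy
      refine ⟨max R R', ?_⟩
      rw [map_add]
      exact Submodule.add_mem _ (twR_mono _ _ _ (le_max_left _ _) hR)
        (twR_mono _ _ _ (le_max_right _ _) hR')
    | smul c x _ hx =>
      obtain ⟨R, hR⟩ := hx
      exact ⟨R, by rw [map_smul]; exact Submodule.smul_mem _ _ hR⟩
  obtain ⟨R, hR⟩ := key (ρ (xT u) v) (by rw [h]; trivial)
  refine ⟨R, ?_⟩
  rw [← Module.End.mul_apply, ← map_mul] at hR
  have : (xT u⁻¹ * xT u : Aff K) = 1 := by ext <;> simp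
  rw [this] at hR
  simpa using hR

lemma exists_twR_of_coinv (ρ : Rep K V) (ψ : AddChar K ℂ) (h : sCoinvKer ρ = ⊤)
    (v : V) : ∃ R, v ∈ twR ρ ψ 0 R := by
  have hw : v ∈ sCoinvKer ρ := by rw [h]; trivial
  unfold sCoinvKer at hw
  induction hw using Submodule.span_induction with
  | mem x hx =>
    obtain ⟨b, v, rfl⟩ := hx
    exact ⟨‖b‖, Submodule.subset_span ⟨b, v, le_rfl, by simp⟩⟩
  | zero => exact ⟨0, by simp⟩
  | add x y _ _ hx hy =>
    obtain ⟨R, hR⟩ := hx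
    obtain ⟨R', hR'⟩ := hy
    exact ⟨max R R', Submodule.add_mem _ (twR_mono _ _ _ (le_max_left _ _) hR)
      (twR_mono _ _ _ (le_max_right _ _) hR')⟩
  | smul c x _ hx =>
    obtain ⟨R, hR⟩ := hx
    exact ⟨R, Submodule.smul_mem _ _ hR⟩

lemma psi_near_one (ψ : AddChar K ℂ) (hψlc : IsLocallyConstant (⇑ψ)) :
    ∃ δ > 0, ∀ x : K, ‖x‖ < δ → ψ x = 1 := by
  have h := hψlc.isOpen_fiber 1
  obtain ⟨δ, hδ, hb⟩ := Metric.isOpen_iff.1 h 0 (by simp)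
  refine ⟨δ, hδ, fun x hx => ?_⟩
  have := hb (show x ∈ ball 0 δ by simpa using hx)
  simpa using this

lemma exists_psi_ne (ψ : AddChar K ℂ) (hψne : ψ ≠ 1) : ∃ y : K, y ≠ 0 ∧ ψ y ≠ 1 := by
  obtain ⟨y, hy⟩ := AddChar.ne_one_iff.1 hψne
  refine ⟨y, ?_, hy⟩
  rintro rfl
  simp at hy

lemma exists_uniform_R (ρ : Rep K V) (ψ : AddChar K ℂ) (hψlc : IsLocallyConstant (⇑ψ))
    (h0 : sCoinvKer ρ = ⊤) (h : sTwistKer ρ ψ = ⊤) (v : V) (r : ℝ) :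
    ∃ R, ∀ a ∈ closedBall (0 : K) r, v ∈ twR ρ ψ a R := by
  refine (isCompact_closedBall (0 : K) r).induction_on
    (p := fun s => ∃ R, ∀ a ∈ s, v ∈ twR ρ ψ a R) ⟨0, by simp⟩ ?_ ?_ ?_
  · rintro s t hst ⟨R, hR⟩
    exact ⟨R, fun a ha => hR a (hst ha)⟩
  · rintro s t ⟨R, hR⟩ ⟨R', hR'⟩
    refine ⟨max R R', ?_⟩
    rintro a (ha | ha)
    · exact twR_mono _ _ _ (le_max_left _ _) (hR a ha)
    · exact twR_mono _ _ _ (le_max_right _ _) (hR' a ha)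
  · intro a _
    have : ∃ R, v ∈ twR ρ ψ a R := by
      by_cases ha : a = 0
      · subst ha; exact exists_twR_of_coinv ρ ψ h0 v
      · exact exists_twR_of_twist ρ ψ h a ha v
    obtain ⟨R, hR⟩ := this
    obtain ⟨δ, hδ, hψ⟩ := psi_near_one ψ hψlc
    refine ⟨ball a (δ / (|R| + 1)), mem_nhdsWithin_of_mem_nhds (ball_mem_nhds _ (by positivity)),
      R, fun a' ha' => ?_⟩
    have : twR ρ ψ a R ≤ twR ρ ψ a' R := by
      refine Submodule.span_mono ?_
      rintro w ⟨b, v, hb, rfl⟩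
      refine ⟨b, v, hb, ?_⟩
      have h1 : ψ ((a' - a) * b) = 1 := by
        apply hψ
        rw [norm_mul]
        rw [mem_ball, dist_eq_norm] at ha'
        have h2 : ‖b‖ < |R| + 1 := by linarith [le_abs_self R]
        calc ‖a' - a‖ * ‖b‖ ≤ ‖a' - a‖ * (|R| + 1) := by gcongr
          _ < δ / (|R| + 1) * (|R| + 1) := by gcongr
          _ = δ := by field_simp
      have h3 : a' * b = (a' - a) * b + a * b := by ring
      rw [h3, AddChar.map_add_eq_mul, h1, one_mul]
    exact this hR

lemma integral_ball_translate [MeasurableSpace K] [BorelSpace K] (μ : Measure K)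
    [μ.IsAddHaarMeasure] (g : K → ℂ) (R : ℝ) (c : K) (hc : ‖c‖ ≤ R) :
    ∫ b in closedBall (0 : K) R, g (b + c) ∂μ = ∫ b in closedBall (0 : K) R, g b ∂μ := by
  rw [← integral_indicator measurableSet_closedBall, ← integral_indicator measurableSet_closedBall]
  rw [← integral_add_right_eq_self (μ := μ) ((closedBall (0 : K) R).indicator g) c]
  congr 1
  funext b
  have : b ∈ closedBall (0 : K) R ↔ b + c ∈ closedBall (0 : K) R := by
    simp only [mem_closedBall, dist_zero_right]
    constructor
    · intro hb
      exact (IsUltrametricDist.norm_add_le_max b c).trans (max_le hb hc)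
    · intro hb
      have := IsUltrametricDist.norm_add_le_max (b + c) (-c)
      rw [add_neg_cancel_right, norm_neg] at this
      exact this.trans (max_le hb hc)
  by_cases hb : b ∈ closedBall (0 : K) R
  · rw [Set.indicator_of_mem hb, Set.indicator_of_mem (this.1 hb)]
  · rw [Set.indicator_of_notMem hb, Set.indicator_of_notMem (fun h => hb (this.2 h))]

lemma coeff_continuous (ρ : Rep K V) (hsm : ∀ v, ∀ᶠ b in 𝓝 (0 : K), ρ (sS b) v = v)
    (lam : V →ₗ[ℂ] ℂ) (w : V) : Continuous fun b : K => lam (ρ (sS b) w) := by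
  apply IsLocallyConstant.continuous
  rw [IsLocallyConstant.iff_eventually_eq]
  intro b
  have h : Tendsto (fun y => y - b) (𝓝 b) (𝓝 (0 : K)) := by
    have : Continuous fun y : K => y - b := by fun_prop
    simpa using this.tendsto b
  filter_upwards [h.eventually (hsm w)] with y hy
  rw [show y = b + (y - b) by ring, ← rho_sS_sS, hy]

lemma integral_twR_zero [MeasurableSpace K] [BorelSpace K] (μ : Measure K)
    [μ.IsAddHaarMeasure] (ρ : Rep K V) (ψ : AddChar K ℂ) (hψlc : IsLocallyConstant (⇑ψ))
    (hsm : ∀ v, ∀ᶠ b in 𝓝 (0 : K), ρ (sS b) v = v)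
    (lam : V →ₗ[ℂ] ℂ) (a : K) (R : ℝ) (w : V) (hw : w ∈ twR ρ ψ a R) :
    ∫ b in closedBall (0 : K) R, ψ (-(a * b)) * lam (ρ (sS b) w) ∂μ = 0 := by
  have hψc : Continuous ψ := hψlc.continuous
  have hint : ∀ w, IntegrableOn (fun b => ψ (-(a * b)) * lam (ρ (sS b) w))
      (closedBall (0 : K) R) μ := by
    intro w
    refine ContinuousOn.integrableOn_compact (isCompact_closedBall _ _) (Continuous.continuousOn ?_)
    exact (hψc.comp (by fun_prop)).mul (coeff_continuous ρ hsm lam w)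
  unfold twR at hw
  induction hw using Submodule.span_induction with
  | mem x hx =>
    obtain ⟨c, v, hc, rfl⟩ := hx
    have h1 : ∀ b, ψ (-(a * b)) * lam (ρ (sS b) (ρ (sS c) v - ψ (a * c) • v)) =
        ψ (a * c) * (ψ (-(a * (b + c))) * lam (ρ (sS (b + c)) v))
        - ψ (a * c) * (ψ (-(a * b)) * lam (ρ (sS b) v)) := by
      intro b
      rw [map_sub, map_sub, map_smul, map_smul, rho_sS_sS]
      have : ψ (-(a * b)) = ψ (a * c) * ψ (-(a * (b + c))) := by
        rw [← AddChar.map_add_eq_mul]; congr 1; ring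
      rw [smul_eq_mul, mul_sub]
      nth_rw 1 [this]
      ring
    simp_rw [h1]
    have ht := integral_ball_translate μ (fun b => ψ (-(a * b)) * lam (ρ (sS b) v)) R c hc
    have hi2 : IntegrableOn (fun b => ψ (-(a * (b + c))) * lam (ρ (sS (b + c)) v))
        (closedBall (0 : K) R) μ := by
      refine ContinuousOn.integrableOn_compact (isCompact_closedBall _ _)
        (Continuous.continuousOn ?_)
      exact (hψc.comp (by fun_prop)).mul ((coeff_continuous ρ hsm lam v).comp (by fun_prop))
    rw [integral_sub (hi2.const_mul _) ((hint v).const_mul _), integral_const_mul,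
      integral_const_mul, ht, sub_self]
  | zero => simp
  | add x y _ _ hx hy =>
    have := integral_add (hint x) (hint y)
    simp only [map_add, mul_add]
    rw [this, hx, hy, add_zero]
  | smul c x _ hx =>
    have h1 : ∀ b, ψ (-(a * b)) * lam (ρ (sS b) (c • x)) =
        c * (ψ (-(a * b)) * lam (ρ (sS b) x)) := by
      intro b; rw [map_smul, map_smul, smul_eq_mul]; ring
    simp_rw [h1]
    rw [integral_const_mul, hx, mul_zero]

lemma integral_char [MeasurableSpace K] [BorelSpace K] (μ : Measure K)
    [μ.IsAddHaarMeasure] (ψ : AddChar K ℂ) (r : ℝ) (b : K) :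
    ∫ a in closedBall (0 : K) r, ψ (-(a * b)) ∂μ =
      {b : K | ∀ a ∈ closedBall (0 : K) r, ψ (a * b) = 1}.indicator
        (fun _ => (μ.real (closedBall (0 : K) r) : ℂ)) b := by
  by_cases hb : b ∈ {b : K | ∀ a ∈ closedBall (0 : K) r, ψ (a * b) = 1}
  · rw [Set.indicator_of_mem hb]
    have : ∫ a in closedBall (0 : K) r, ψ (-(a * b)) ∂μ
        = ∫ a in closedBall (0 : K) r, (1 : ℂ) ∂μ := by
      refine setIntegral_congr_fun measurableSet_closedBall fun a ha => ?_
      have := hb a ha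
      simp only [AddChar.map_neg_eq_inv, this, inv_one]
    rw [this]
    simp
  · rw [Set.indicator_of_notMem hb]
    simp only [Set.mem_ofPred_eq, not_forall] at hb
    obtain ⟨c, hc, hne⟩ := hb
    have ht := integral_ball_translate μ (fun a => ψ (-(a * b))) r c (by simpa using hc)
    have h1 : ∀ a, ψ (-((a + c) * b)) = (ψ (c * b))⁻¹ * ψ (-(a * b)) := by
      intro a
      rw [← AddChar.map_neg_eq_inv, ← AddChar.map_add_eq_mul]; congr 1; ring
    simp_rw [h1] at ht
    rw [integral_const_mul] at ht
    by_contra h0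
    have := mul_right_cancel₀ h0 (ht.trans (one_mul _).symm)
    exact hne (inv_eq_one.1 this)

lemma vanishing (ρ : Rep K V) (ψ : AddChar K ℂ) (hψlc : IsLocallyConstant (⇑ψ)) (hψne : ψ ≠ 1)
    (hsm : ∀ v, ∀ᶠ b in 𝓝 (0 : K), ρ (sS b) v = v)
    (h0 : sCoinvKer ρ = ⊤) (h : sTwistKer ρ ψ = ⊤) (v : V) : v = 0 := by
  by_contra hv
  obtain ⟨lam, hlam⟩ : ∃ lam : V →ₗ[ℂ] ℂ, lam v ≠ 0 := by
    by_contra hcon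
    push Not at hcon
    exact hv ((Module.forall_dual_apply_eq_zero_iff ℂ v).1 hcon)
  borelize K
  let μ : Measure K := Measure.addHaar
  have hψc : Continuous ψ := hψlc.continuous
  obtain ⟨ε, hε, hfix⟩ := Metric.eventually_nhds_iff.1 (hsm v)
  obtain ⟨y, hy0, hy⟩ := exists_psi_ne ψ hψne
  have hyn : 0 < ‖y‖ := norm_pos_iff.2 hy0
  set r : ℝ := ‖y‖ / ε with hr
  have hrpos : 0 < r := by positivity
  set P : Set K := {b : K | ∀ a ∈ closedBall (0 : K) r, ψ (a * b) = 1} with hP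
  have hPsub : ∀ b ∈ P, ‖b‖ < ε := by
    intro b hb
    by_contra hcon
    push Not at hcon
    have hb0 : b ≠ 0 := by rintro rfl; simp at hcon; linarith
    apply hy
    have := hb (y / b) (by
      simp only [mem_closedBall, dist_zero_right, norm_div, hr]
      gcongr)
    rwa [div_mul_cancel₀ _ hb0] at this
  have hPclosed : IsClosed P := by
    have : P = ⋂ a ∈ closedBall (0 : K) r, {b | ψ (a * b) = 1} := by ext; simp [hP]
    rw [this]
    refine isClosed_biInter fun a _ => ?_
    exact isClosed_eq (hψc.comp (by fun_prop)) continuous_const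
  obtain ⟨R₀, hR₀⟩ := exists_uniform_R ρ ψ hψlc h0 h v r
  set R := max R₀ ε
  have hR : ∀ a ∈ closedBall (0 : K) r, v ∈ twR ρ ψ a R := fun a ha =>
    twR_mono _ _ _ (le_max_left _ _) (hR₀ a ha)
  have e1 : ∫ a in closedBall (0 : K) r, (∫ b in closedBall (0 : K) R,
      ψ (-(a * b)) * lam (ρ (sS b) v) ∂μ) ∂μ = 0 := by
    rw [setIntegral_congr_fun (g := fun _ => (0 : ℂ)) measurableSet_closedBall]
    · simp
    · intro a ha
      exact integral_twR_zero μ ρ ψ hψlc hsm lam a R v (hR a ha)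
  rw [integral_integral_swap] at e1
  swap
  · rw [Measure.prod_restrict]
    refine ContinuousOn.integrableOn_compact
      ((isCompact_closedBall _ _).prod (isCompact_closedBall _ _)) (Continuous.continuousOn ?_)
    exact (hψc.comp (by fun_prop)).mul ((coeff_continuous ρ hsm lam v).comp continuous_snd)
  have e2 : ∀ b, ∫ a in closedBall (0 : K) r, ψ (-(a * b)) * lam (ρ (sS b) v) ∂μ
      = P.indicator (fun _ => (μ.real (closedBall (0 : K) r) : ℂ) * lam v) b := by
    intro b
    rw [integral_mul_const, integral_char]
    by_cases hb : b ∈ P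
    · rw [Set.indicator_of_mem hb, Set.indicator_of_mem hb, hfix (by simpa using hPsub b hb)]
    · rw [Set.indicator_of_notMem hb, Set.indicator_of_notMem hb, zero_mul]
  simp_rw [e2] at e1
  rw [setIntegral_indicator hPclosed.measurableSet, setIntegral_const] at e1
  have hPR : closedBall (0 : K) R ∩ P = P := by
    refine Set.inter_eq_right.2 fun b hb => ?_
    rw [mem_closedBall, dist_zero_right]
    exact (hPsub b hb).le.trans (le_max_right R₀ ε)
  rw [hPR] at e1
  have hPnhds : P ∈ 𝓝 (0 : K) := by
    obtain ⟨δ, hδ, hψ⟩ := psi_near_one ψ hψlc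
    refine mem_of_superset (ball_mem_nhds (0 : K) (show 0 < δ / r by positivity)) ?_
    intro b hb a ha
    apply hψ
    simp only [mem_ball, mem_closedBall, dist_zero_right] at ha hb
    rw [norm_mul]
    calc ‖a‖ * ‖b‖ ≤ r * ‖b‖ := by gcongr
      _ < r * (δ / r) := by gcongr
      _ = δ := by field_simp
  have hPfin : μ P ≠ ⊤ := by
    refine ne_top_of_le_ne_top (measure_closedBall_lt_top (μ := μ) (x := (0 : K)) (r := R)).ne
      (measure_mono ?_)
    rw [← hPR]; exact Set.inter_subset_left
  have hP0 : μ.real P ≠ 0 := by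
    rw [measureReal_def, ENNReal.toReal_ne_zero]
    exact ⟨(Measure.measure_pos_of_mem_nhds μ hPnhds).ne', hPfin⟩
  have hr0 : μ.real (closedBall (0 : K) r) ≠ 0 := by
    rw [measureReal_def, ENNReal.toReal_ne_zero]
    exact ⟨(measure_closedBall_pos μ _ hrpos).ne', measure_closedBall_lt_top.ne⟩
  simp [hP0, hr0, hlam] at e1

lemma SSx_mem_span (ψ : AddChar K ℂ) (hψlc : IsLocallyConstant (⇑ψ)) (hψne : ψ ≠ 1) (a : K)
    (f : SSx K) (hf : ∀ x : Kˣ, f.1 x ≠ 0 → (x : K) ≠ a) :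
    f ∈ Submodule.span ℂ {w : SSx K | ∃ (b : K) (g : SSx K),
      w = SRep ψ hψlc (sS b) g - ψ (a * b) • g} := by
  set N := Submodule.span ℂ {w : SSx K | ∃ (b : K) (g : SSx K),
      w = SRep ψ hψlc (sS b) g - ψ (a * b) • g} with hN
  obtain ⟨y, hy0, hy⟩ := exists_psi_ne ψ hψne
  have hclosed : IsClosed (Function.support f.1) := by
    have : Function.support f.1 = {x | f.1 x = 0}ᶜ := by ext; simp
    rw [this]
    exact (f.2.1.isClopen_fiber 0).compl.isClosed
  have hcomp : IsCompact (Function.support f.1) := by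
    have h := f.2.2
    rwa [HasCompactSupport, tsupport, hclosed.closure_eq] at h
  have key : ∃ C : Set Kˣ, IsClopen C ∧ Function.support f.1 ⊆ C ∧
      ∀ h : SSx K, Function.support h.1 ⊆ C → h ∈ N := by
    refine hcomp.induction_on (p := fun s => ∃ C : Set Kˣ, IsClopen C ∧ s ⊆ C ∧
      ∀ h : SSx K, Function.support h.1 ⊆ C → h ∈ N) ?_ ?_ ?_ ?_
    · refine ⟨∅, isClopen_empty, subset_rfl, fun h hh => ?_⟩
      have : h = 0 := by
        apply Subtype.ext
        exact Function.support_eq_empty_iff.1 (Set.subset_empty_iff.1 hh)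
      rw [this]; exact N.zero_mem
    · rintro s t hst ⟨C, hC, hs, hh⟩
      exact ⟨C, hC, hst.trans hs, hh⟩
    · rintro s t ⟨C, hC, hs, hh⟩ ⟨D, hD, ht, hh'⟩
      refine ⟨C ∪ D, hC.union hD, Set.union_subset_union hs ht, fun h hsup => ?_⟩
      have hlc : IsLocallyConstant (C.indicator (1 : Kˣ → ℂ)) := by
        exact (LocallyConstant.charFn ℂ hC).isLocallyConstant
      let h1 : SSx K := ⟨C.indicator (1 : Kˣ → ℂ) * h.1, hlc.mul h.2.1, h.2.2.mul_left⟩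
      have e1 : h1 ∈ N := by
        apply hh
        intro x hx
        by_contra hxC
        apply hx
        simp [h1, hxC]
      have e2 : h - h1 ∈ N := by
        apply hh'
        intro x hx
        by_cases hxC : x ∈ C
        · exact absurd (by simp [h1, hxC]) hx
        · have : h.1 x ≠ 0 := by
            intro h0
            exact hx (by simp [h1, h0])
          exact (hsup this).resolve_left hxC
      have := N.add_mem e1 e2
      rwa [add_sub_cancel] at this
    · intro x hx
      have hxa : (x : K) - a ≠ 0 := sub_ne_zero.2 (hf x hx)
      set b : K := y / (x - a) with hb
      have hne : ψ (b * x) - ψ (a * b) ≠ 0 := by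
        intro h0
        apply hy
        have h1 : y = b * x + -(a * b) := by rw [hb]; field_simp; ring
        rw [h1, AddChar.map_add_eq_mul, sub_eq_zero.1 h0, ← AddChar.map_add_eq_mul]
        simp
      have hlc : IsLocallyConstant (fun z : Kˣ => ψ (b * (z : K))) :=
        hψlc.comp_continuous (continuous_const.mul Units.continuous_val)
      have hC : IsClopen {z : Kˣ | ψ (b * (z : K)) = ψ (b * x)} := hlc.isClopen_fiber _
      refine ⟨_, mem_nhdsWithin_of_mem_nhds (hC.isOpen.mem_nhds (show x ∈ _ from rfl)), _, hC,
        subset_rfl, fun h hsup => ?_⟩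
      refine Submodule.subset_span ⟨b, (ψ (b * x) - ψ (a * b))⁻¹ • h, ?_⟩
      apply Subtype.ext
      funext z
      show h.1 z = ψ (b * (z : K)) * ((ψ (b * x) - ψ (a * b))⁻¹ * h.1 (z * 1))
        - ψ (a * b) * ((ψ (b * x) - ψ (a * b))⁻¹ * h.1 z)
      rw [mul_one]
      by_cases hz : h.1 z = 0
      · simp [hz]
      · have : ψ (b * (z : K)) = ψ (b * x) := hsup hz
        rw [this, ← sub_mul, mul_inv_cancel_left₀ hne]
  obtain ⟨C, -, hsub, hh⟩ := key
  exact hh f hsub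

lemma SSx_smooth (ψ : AddChar K ℂ) (hψlc : IsLocallyConstant (⇑ψ)) (f : SSx K) :
    ∀ᶠ b in 𝓝 (0 : K), SRep ψ hψlc (sS b) f = f := by
  obtain ⟨δ, hδ, hψ⟩ := psi_near_one ψ hψlc
  have hbd : Bornology.IsBounded (((↑) : Kˣ → K) '' tsupport f.1) :=
    (f.2.2.isCompact.image Units.continuous_val).isBounded
  obtain ⟨B, hB⟩ := hbd.exists_norm_le
  refine Metric.eventually_nhds_iff.2 ⟨δ / (|B| + 1), by positivity, fun b hb => ?_⟩
  rw [dist_zero_right] at hb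
  apply Subtype.ext
  funext z
  show ψ (b * (z : K)) * f.1 (z * 1) = f.1 z
  rw [mul_one]
  by_cases hz : f.1 z = 0
  · simp [hz]
  · have hz' : ‖(z : K)‖ ≤ B := hB _ ⟨z, subset_tsupport _ hz, rfl⟩
    rw [hψ, one_mul]
    rw [norm_mul]
    have h2 : ‖(z : K)‖ ≤ |B| + 1 := by linarith [le_abs_self B]
    calc ‖b‖ * ‖(z : K)‖ ≤ ‖b‖ * (|B| + 1) := by gcongr
      _ < δ / (|B| + 1) * (|B| + 1) := by gcongr
      _ = δ := by field_simp

/-- Any nonzero invariant subspace of `𝕊` is everything. -/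
lemma SSx_irred (ψ : AddChar K ℂ) (hψlc : IsLocallyConstant (⇑ψ)) (hψne : ψ ≠ 1)
    (U : Submodule ℂ (SSx K)) (hU : GRep.Invariant (SRep ψ hψlc) U) (hne : U ≠ ⊥) : U = ⊤ := by
  obtain ⟨f, hfU, hf0⟩ := Submodule.exists_mem_ne_zero_of_ne_bot hne
  obtain ⟨x, hx⟩ : ∃ x, f.1 x ≠ 0 := by
    by_contra hcon
    push Not at hcon
    exact hf0 (Subtype.ext (funext hcon))
  obtain ⟨f1, hf1U, hf1⟩ : ∃ f1 ∈ U, f1.1 1 = 1 := by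
    refine ⟨(f.1 x)⁻¹ • SRep ψ hψlc (xT x) f, U.smul_mem _ (hU _ _ hfU), ?_⟩
    show (f.1 x)⁻¹ * (ψ (0 * ((1 : Kˣ) : K)) * f.1 (1 * x)) = 1
    simp [hx]
  set σ := GRep.quot (SRep ψ hψlc) U hU
  have hsm : ∀ v, ∀ᶠ b in 𝓝 (0 : K), σ (sS b) v = v := by
    intro v
    obtain ⟨g, rfl⟩ := Submodule.Quotient.mk_surjective U v
    filter_upwards [SSx_smooth ψ hψlc g] with b hb
    rw [GRep.quot_apply, hb]
  have h0 : sCoinvKer σ = ⊤ := by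
    rw [eq_top_iff]
    rintro v -
    obtain ⟨g, rfl⟩ := Submodule.Quotient.mk_surjective U v
    have hg := SSx_mem_span ψ hψlc hψne 0 g (fun x _ => x.ne_zero)
    have := Submodule.mem_map_of_mem (f := U.mkQ) hg
    refine Submodule.map_le_iff_le_comap.2 (Submodule.span_le.2 ?_) this
    rintro w ⟨b, g, rfl⟩
    refine Submodule.subset_span ⟨b, Submodule.Quotient.mk g, ?_⟩
    rw [GRep.quot_apply]
    simp
  have h1 : sTwistKer σ ψ = ⊤ := by
    rw [eq_top_iff]
    rintro v -
    obtain ⟨g, rfl⟩ := Submodule.Quotient.mk_surjective U v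
    have heq : (Submodule.Quotient.mk g : SSx K ⧸ U) = U.mkQ (g - g.1 1 • f1) := by
      rw [map_sub, map_smul]
      simp [(Submodule.Quotient.mk_eq_zero U).2 hf1U]
    rw [heq]
    have hg := SSx_mem_span ψ hψlc hψne 1 (g - g.1 1 • f1) (by
      intro x hx h1
      have : x = 1 := Units.ext h1
      subst this
      apply hx
      show g.1 1 - g.1 1 * f1.1 1 = 0
      rw [hf1]; ring)
    have := Submodule.mem_map_of_mem (f := U.mkQ) hg
    refine Submodule.map_le_iff_le_comap.2 (Submodule.span_le.2 ?_) this
    rintro w ⟨b, g, rfl⟩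
    refine Submodule.subset_span ⟨b, Submodule.Quotient.mk g, ?_⟩
    rw [GRep.quot_apply]
    simp
  rw [eq_top_iff]
  rintro g -
  exact (Submodule.Quotient.mk_eq_zero U).1 (vanishing σ ψ hψlc hψne hsm h0 h1 _)

lemma smooth_S (ρ : Rep K V) (hρ : IsSmoothRep ρ) (v : V) :
    ∀ᶠ b in 𝓝 (0 : K), ρ (sS b) v = v := by
  have hc : Continuous (fun b : K => (sS b : Aff K)) := by
    rw [continuous_induced_rng]
    exact continuous_const.prodMk continuous_id
  exact ((hρ v).preimage hc).mem_nhds (by simpa using rho_sS_zero ρ v)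

lemma smooth_T (ρ : Rep K V) (hρ : IsSmoothRep ρ) (v : V) :
    ∀ᶠ u in 𝓝 (1 : Kˣ), ρ (xT u) v = v := by
  have hc : Continuous (fun u : Kˣ => (xT u : Aff K)) := by
    rw [continuous_induced_rng]
    exact continuous_id.prodMk continuous_const
  refine ((hρ v).preimage hc).mem_nhds ?_
  have : (xT (1 : Kˣ) : Aff K) = 1 := rfl
  simp [this]

lemma coeff_S (ρ : Rep K V) (ψ : AddChar K ℂ) (lam : V →ₗ[ℂ] ℂ)
    (hlam : sTwistKer ρ ψ ≤ LinearMap.ker lam) (x : Kˣ) (b : K) (v : V) :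
    lam (ρ (xT x) (ρ (sS b) v)) = ψ (b * x) * lam (ρ (xT x) v) := by
  rw [rho_xT_sS]
  have h : ρ (sS ((x : K) * b)) (ρ (xT x) v) - ψ ((x : K) * b) • ρ (xT x) v ∈ sTwistKer ρ ψ :=
    Submodule.subset_span ⟨_, _, rfl⟩
  have := hlam h
  rw [LinearMap.mem_ker, map_sub, map_smul, sub_eq_zero] at this
  rw [this, mul_comm b]; rfl

lemma isCompact_units (δ B : ℝ) (hδ : 0 < δ) :
    IsCompact {x : Kˣ | δ ≤ ‖(x : K)‖ ∧ ‖(x : K)‖ ≤ B} := by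
  have hemb : IsClosedEmbedding (Units.embedProduct K) := Units.isClosedEmbedding_embedProduct
  have h2 : IsCompact ((closedBall (0 : K) B) ×ˢ
      (MulOpposite.op '' closedBall (0 : K) δ⁻¹)) :=
    (isCompact_closedBall _ _).prod
      ((isCompact_closedBall _ _).image MulOpposite.continuous_op)
  have h3 := hemb.isCompact_preimage h2
  refine h3.of_isClosed_subset ?_ ?_
  · have hc : Continuous fun x : Kˣ => ‖(x : K)‖ := Units.continuous_val.norm
    exact (isClosed_le continuous_const hc).inter (isClosed_le hc continuous_const)
  · rintro x ⟨h1, h2⟩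
    refine ⟨by simpa using h2, ⟨((x⁻¹ : Kˣ) : K), ?_, rfl⟩⟩
    simp only [mem_closedBall, dist_zero_right, Units.val_inv_eq_inv_val, norm_inv]
    gcongr

lemma coeff_mem (ρ : Rep K V) (hρ : IsSmoothRep ρ) (ψ : AddChar K ℂ)
    (hψlc : IsLocallyConstant (⇑ψ)) (hψne : ψ ≠ 1) (h0 : sCoinvKer ρ = ⊤) (lam : V →ₗ[ℂ] ℂ)
    (hlam : sTwistKer ρ ψ ≤ LinearMap.ker lam) (v : V) :
    (fun x : Kˣ => lam (ρ (xT x) v)) ∈ SSx K := by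
  constructor
  · rw [IsLocallyConstant.iff_eventually_eq]
    intro x
    have h : Tendsto (fun y : Kˣ => x⁻¹ * y) (𝓝 x) (𝓝 1) := by
      have : Continuous fun y : Kˣ => x⁻¹ * y := by fun_prop
      simpa using this.tendsto x
    filter_upwards [h.eventually (smooth_T ρ hρ v)] with y hy
    have : ρ (xT y) v = ρ (xT x) (ρ (xT (x⁻¹ * y)) v) := by
      rw [← Module.End.mul_apply, ← map_mul]
      congr 2
      ext <;> simp
    rw [this, hy]
  · obtain ⟨δ, hδ, hψ⟩ := psi_near_one ψ hψlc
    have hnear : ∀ w ∈ sCoinvKer ρ, ∃ η > 0, ∀ x : Kˣ, ‖(x : K)‖ < η → lam (ρ (xT x) w) = 0 := by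
      intro w hw
      unfold sCoinvKer at hw
      induction hw using Submodule.span_induction with
      | mem w hw =>
        obtain ⟨b, u, rfl⟩ := hw
        refine ⟨δ / (‖b‖ + 1), by positivity, fun x hx => ?_⟩
        rw [map_sub, map_sub, coeff_S ρ ψ lam hlam, hψ, one_mul, sub_self]
        rw [norm_mul]
        calc ‖b‖ * ‖(x : K)‖ ≤ (‖b‖ + 1) * ‖(x : K)‖ := by gcongr; linarith
          _ < (‖b‖ + 1) * (δ / (‖b‖ + 1)) := by gcongr
          _ = δ := by field_simp
      | zero => exact ⟨1, one_pos, by simp⟩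
      | add u w _ _ hu hw =>
        obtain ⟨η, hη, h⟩ := hu
        obtain ⟨η', hη', h'⟩ := hw
        refine ⟨min η η', lt_min hη hη', fun x hx => ?_⟩
        rw [map_add, map_add, h x (hx.trans_le (min_le_left _ _)),
          h' x (hx.trans_le (min_le_right _ _)), add_zero]
      | smul c u _ hu =>
        obtain ⟨η, hη, h⟩ := hu
        exact ⟨η, hη, fun x hx => by rw [map_smul, map_smul, h x hx, smul_zero]⟩
    obtain ⟨η, hη, hη'⟩ := hnear v (by rw [h0]; trivial)
    obtain ⟨ε, hε, hfix⟩ := Metric.eventually_nhds_iff.1 (smooth_S ρ hρ v)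
    obtain ⟨y, hy0, hy⟩ := exists_psi_ne ψ hψne
    refine HasCompactSupport.intro (isCompact_units (K := K) η (‖y‖ / ε) hη) ?_
    intro x hx
    by_contra hne
    apply hx
    refine ⟨?_, ?_⟩
    · by_contra hcon
      exact hne (hη' x (not_le.1 hcon))
    · by_contra hcon
      rw [not_le] at hcon
      have hxpos : 0 < ‖(x : K)‖ := norm_pos_iff.2 x.ne_zero
      have hb : ‖y / (x : K)‖ < ε := by
        rw [norm_div, div_lt_iff₀ hxpos]
        rw [div_lt_iff₀ hε] at hcon
        linarith
      have h1 := coeff_S ρ ψ lam hlam x (y / x) v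
      rw [hfix (by simpa using hb), div_mul_cancel₀ _ x.ne_zero] at h1
      have := mul_right_cancel₀ hne ((one_mul _).trans h1)
      exact hy this.symm

end Helpers

section Statements

open Aff

variable {K : Type*} [NontriviallyNormedField K] [IsUltrametricDist K] [ProperSpace K]

theorem statement4
    (hchar : (2 : K) ≠ 0)
    (ψ : AddChar K ℂ) (hψlc : IsLocallyConstant (⇑ψ)) (hψne : ψ ≠ 1)
    {V : Type*} [AddCommGroup V] [Module ℂ V]
    (ρ : Rep K V) (hρ : IsSmoothRep ρ) (hirr : GRep.Irred ρ) (hS : sInv ρ ≠ ⊤) :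
    GRep.Iso ρ (SRep ψ hψlc) := by
  obtain ⟨hnt, hirr⟩ := hirr
  have h0 : sCoinvKer ρ = ⊤ := by
    refine (hirr _ (sCoinvKer_invariant ρ)).resolve_left fun hbot => hS ?_
    rw [eq_top_iff]
    rintro v - b
    have : ρ (sS b) v - v ∈ sCoinvKer ρ := Submodule.subset_span ⟨b, v, rfl⟩
    rw [hbot, Submodule.mem_bot, sub_eq_zero] at this
    exact this
  have h1 : sTwistKer ρ ψ ≠ ⊤ := by
    intro h1
    obtain ⟨v, hv⟩ := exists_ne (0 : V)
    exact hv (vanishing ρ ψ hψlc hψne (smooth_S ρ hρ) h0 h1 v)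
  obtain ⟨lam, hlam0, hlam⟩ := Submodule.exists_le_ker_of_lt_top _ (lt_top_iff_ne_top.2 h1)
  let Φ : V →ₗ[ℂ] SSx K :=
    { toFun := fun v => ⟨fun x => lam (ρ (xT x) v), coeff_mem ρ hρ ψ hψlc hψne h0 lam hlam v⟩
      map_add' := fun v w => by
        apply Subtype.ext; funext x
        show lam (ρ (xT x) (v + w)) = lam (ρ (xT x) v) + lam (ρ (xT x) w)
        rw [map_add, map_add]
      map_smul' := fun c v => by
        apply Subtype.ext; funext x
        show lam (ρ (xT x) (c • v)) = c * lam (ρ (xT x) v)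
        rw [map_smul, map_smul, smul_eq_mul] }
  have hΦ : GRep.Equivariant ρ (SRep ψ hψlc) Φ := by
    intro g v
    apply Subtype.ext; funext x
    show lam (ρ (xT x) (ρ g v)) = ψ (g.s * (x : K)) * lam (ρ (xT (x * g.t)) v)
    have hg : g = sS g.s * xT g.t := by ext <;> simp
    have h2 : ρ g v = ρ (sS g.s) (ρ (xT g.t) v) := by
      conv_lhs => rw [hg]
      rw [map_mul, Module.End.mul_apply]
    rw [h2, coeff_S ρ ψ lam hlam, ← Module.End.mul_apply (ρ (xT x)), ← map_mul]
    congr 4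
    ext <;> simp
  have hΦne : Φ ≠ 0 := by
    intro hz
    apply hlam0
    ext v
    have := congrFun (congrArg Subtype.val (LinearMap.congr_fun hz v)) 1
    have h3 : lam (ρ (xT (1 : Kˣ)) v) = 0 := this
    have h4 : (xT (1 : Kˣ) : Aff K) = 1 := rfl
    simpa [h4] using h3
  have hker : LinearMap.ker Φ = ⊥ := by
    refine (hirr _ (GRep.ker_invariant ρ _ Φ hΦ)).resolve_right fun h => hΦne ?_
    exact LinearMap.ker_eq_top.1 h
  have hrange : LinearMap.range Φ = ⊤ := by
    refine SSx_irred ψ hψlc hψne _ (GRep.range_invariant ρ _ Φ hΦ) fun h => hΦne ?_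
    exact LinearMap.range_eq_bot.1 h
  exact ⟨LinearEquiv.ofBijective Φ ⟨LinearMap.ker_eq_bot.1 hker, LinearMap.range_eq_top.1 hrange⟩,
    fun g v => hΦ g v⟩

end Statements

end PSW
end
end

section
/- For a TS-module M of finite length, the subspace M^S of S-invariants is the maximal finite-dimensional TS-submodule of M: every finite-dimensional TS-submodule of M is contained in M^S (in particular S acts trivially on it), and M^S itself is finite-dimensional. -/
noncomputable section

open scoped Classical

namespace PSW

section Helpers

lemma orbit_scalar {T : Type*} [CommGroup T] {X : Type*} [AddCommGroup X] [Module ℂ X]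
    (σ : Representation ℂ T X) (x : X) (hx : x ≠ 0)
    (hcount : (Set.range fun t => σ t x).Countable)
    (hmin : ∀ C : Submodule ℂ X, GRep.Invariant σ C →
      C ≤ Submodule.span ℂ (Set.range fun t => σ t x) → C = ⊥ ∨ x ∈ C) :
    ∀ t, ∃ z : ℂ, σ t x = z • x := by
  let A := σ.asAlgebraHom
  have hAof : ∀ t, A (MonoidAlgebra.of ℂ T t) = σ t := fun t =>
    Representation.asAlgebraHom_of σ t
  let m : Ideal (MonoidAlgebra ℂ T) :=
    { carrier := {r | A r x = 0}
      zero_mem' := by simp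
      add_mem' := fun {a b} ha hb => by
        simp only [Set.mem_setOf_eq] at ha hb ⊢
        rw [map_add, LinearMap.add_apply, ha, hb, add_zero]
      smul_mem' := fun c r hr => by
        simp only [Set.mem_setOf_eq, smul_eq_mul] at hr ⊢
        rw [map_mul, Module.End.mul_apply, hr, map_zero] }
  have mem_m : ∀ r, r ∈ m ↔ A r x = 0 := fun r => Iff.rfl
  have hspan : ∀ r, A r x ∈ Submodule.span ℂ (Set.range fun t => σ t x) := by
    intro r
    induction r using MonoidAlgebra.induction_on with
    | of t => rw [hAof]; exact Submodule.subset_span ⟨t, rfl⟩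
    | add a b ha hb => rw [map_add, LinearMap.add_apply]; exact Submodule.add_mem _ ha hb
    | smul c a ha => rw [map_smul, LinearMap.smul_apply]; exact Submodule.smul_mem _ _ ha
  have hmax : m.IsMaximal := by
    rw [Ideal.isMaximal_iff]
    refine ⟨fun h => hx (by simpa [mem_m] using h), ?_⟩
    intro J r hmJ hr hrJ
    let C : Submodule ℂ X := LinearMap.range
      ((LinearMap.applyₗ (R := ℂ) (A r x)).comp A.toLinearMap)
    have hC : ∀ y, y ∈ C ↔ ∃ s, A s (A r x) = y := fun y => Iff.rfl
    have hC1 : GRep.Invariant σ C := by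
      intro t y hy
      obtain ⟨s, rfl⟩ := (hC _).1 hy
      refine (hC _).2 ⟨MonoidAlgebra.of ℂ T t * s, ?_⟩
      rw [map_mul, hAof, Module.End.mul_apply]
    have hC2 : C ≤ Submodule.span ℂ (Set.range fun t => σ t x) := by
      intro y hy
      obtain ⟨s, rfl⟩ := (hC _).1 hy
      rw [← Module.End.mul_apply, ← map_mul]
      exact hspan _
    rcases hmin C hC1 hC2 with h | h
    · exfalso
      apply hr
      rw [mem_m]
      have : A r x ∈ C := (hC _).2 ⟨1, by simp⟩
      rw [h] at this
      simpa using this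
    · obtain ⟨s, hs⟩ := (hC _).1 h
      have h1 : 1 - s * r ∈ m := by
        rw [mem_m, map_sub, map_mul, LinearMap.sub_apply, Module.End.mul_apply, hs]
        simp
      have := J.add_mem (hmJ h1) (J.mul_mem_left s hrJ)
      simpa using this
  letI : Field (MonoidAlgebra ℂ T ⧸ m) := Ideal.Quotient.field m
  let L := MonoidAlgebra ℂ T ⧸ m
  let q : MonoidAlgebra ℂ T →ₐ[ℂ] L := Ideal.Quotient.mkₐ ℂ m
  have hq0 : ∀ r, q r = 0 ↔ A r x = 0 := fun r => by
    rw [← mem_m]; exact Ideal.Quotient.eq_zero_iff_mem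
  have hgen : ∀ r, q r ∈ Submodule.span ℂ (Set.range fun t => q (MonoidAlgebra.of ℂ T t)) := by
    intro r
    induction r using MonoidAlgebra.induction_on with
    | of t => exact Submodule.subset_span ⟨t, rfl⟩
    | add a b ha hb => rw [map_add]; exact Submodule.add_mem _ ha hb
    | smul c a ha => rw [map_smul]; exact Submodule.smul_mem _ _ ha
  have htop : Submodule.span ℂ (Set.range fun t => q (MonoidAlgebra.of ℂ T t)) = ⊤ := by
    rw [eq_top_iff]
    intro y _
    obtain ⟨r, rfl⟩ := Ideal.Quotient.mk_surjective y
    exact hgen r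
  have hc : (Set.range fun t => q (MonoidAlgebra.of ℂ T t)).Countable := by
    have : Countable (Set.range fun t => σ t x) := hcount.to_subtype
    have : (Set.range fun t => q (MonoidAlgebra.of ℂ T t)) ⊆
        Set.range (fun y : Set.range (fun t => σ t x) =>
          q (MonoidAlgebra.of ℂ T y.2.choose)) := by
      rintro _ ⟨t, rfl⟩
      let y : Set.range (fun t => σ t x) := ⟨σ t x, t, rfl⟩
      refine ⟨y, ?_⟩
      have hy : σ y.2.choose x = σ t x := y.2.choose_spec
      simp only
      rw [← sub_eq_zero, ← map_sub, hq0, map_sub, hAof, hAof, LinearMap.sub_apply, hy, sub_self]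
    exact (Set.countable_range _).mono this
  have hrank : Module.rank ℂ L ≤ Cardinal.aleph0 := by
    rw [← rank_top, ← htop]
    exact (rank_span_le _).trans (Cardinal.le_aleph0_iff_set_countable.2 hc)
  have hint : Algebra.IsIntegral ℂ L := by
    have : Algebra.IsAlgebraic ℂ L := by
      constructor
      intro a
      by_contra ha
      have h2 := (Transcendental.linearIndependent_sub_inv (F := ℂ) ha).cardinal_lift_le_rank
      have h3 := h2.trans (Cardinal.lift_le.2 hrank)
      simp [Cardinal.mk_complex] at h3
      exact absurd h3 (not_le.2 Cardinal.aleph0_lt_continuum)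
    infer_instance
  intro t
  obtain ⟨z, hz⟩ := (IsAlgClosed.algebraMap_bijective_of_isIntegral (k := ℂ) (K := L)).2
    (q (MonoidAlgebra.of ℂ T t))
  refine ⟨z, ?_⟩
  rw [← AlgHom.commutes q, ← sub_eq_zero, ← map_sub, hq0, map_sub, hAof, AlgHom.commutes,
    LinearMap.sub_apply, Module.algebraMap_end_apply, sub_eq_zero] at hz
  exact hz.symm

open Aff

variable {K : Type*} [NontriviallyNormedField K]
variable {V : Type*} [AddCommGroup V] [Module ℂ V]

lemma continuous_xT : Continuous (xT : Kˣ → Aff K) :=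
  continuous_induced_rng.2 (by
    show Continuous fun u : Kˣ => (u, (0 : K))
    fun_prop)

lemma continuous_sS : Continuous (sS : K → Aff K) :=
  continuous_induced_rng.2 (by
    show Continuous fun b : K => ((1 : Kˣ), b)
    fun_prop)

lemma orbit_countable [ProperSpace K] (ρ : Rep K V) (hρ : IsSmoothRep ρ) (v : V) :
    (Set.range fun u : Kˣ => ρ (xT u) v).Countable := by
  have : SecondCountableTopology Kˣ := by
    have : SecondCountableTopology Kᵐᵒᵖ :=
      (MulOpposite.opHomeomorph (M := K)).symm.isInducing.secondCountableTopology
    exact Units.isInducing_embedProduct.secondCountableTopology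
  have : Countable (Set.range fun u : Kˣ => ρ (xT u) v) := by
    refine Pairwise.countable_of_isOpen_disjoint (α := Kˣ)
      (s := fun w => {u : Kˣ | ρ (xT u) v = w.1}) ?_ ?_ ?_
    · intro w w' hne
      rw [Function.onFun, Set.disjoint_left]
      intro u hu hu'
      exact hne (Subtype.ext (hu.symm.trans hu'))
    · rintro ⟨_, u₀, rfl⟩
      have h := (hρ v).preimage (continuous_xT.comp (continuous_const_mul u₀⁻¹))
      convert h using 1
      ext u
      simp only [Set.mem_setOf_eq, Set.mem_preimage, Function.comp_apply]
      have e : xT (u₀⁻¹ * u) = xT u₀⁻¹ * (xT u : Aff K) := xTHom.map_mul _ _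
      have e2 : xT u₀ * xT u₀⁻¹ = (1 : Aff K) := by ext <;> simp
      have e3 : xT u₀⁻¹ * xT u₀ = (1 : Aff K) := by ext <;> simp
      rw [e, map_mul, Module.End.mul_apply]
      constructor
      · intro h
        rw [h, ← Module.End.mul_apply, ← map_mul, e3, map_one, Module.End.one_apply]
      · intro h
        conv_rhs => rw [← h]
        rw [← Module.End.mul_apply (ρ (xT u₀)), ← map_mul, e2, map_one, Module.End.one_apply]
    · rintro ⟨_, u₀, rfl⟩
      exact ⟨u₀, rfl⟩
  exact Set.countable_coe_iff.1 this

lemma part1 (ρ : Rep K V) (hρ : IsSmoothRep ρ) (U : Submodule ℂ V)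
    (hU : GRep.Invariant ρ U) (hfin : Module.Finite ℂ ↥U) : U ≤ sInv ρ := by
  obtain ⟨F, hF⟩ := (Module.Finite.iff_fg.1 hfin)
  have hev : ∀ᶠ b in nhds (0 : K), ∀ w ∈ F, ρ (sS b) w = w := by
    rw [Filter.eventually_all_finset]
    intro w _
    refine ((hρ w).preimage continuous_sS).mem_nhds ?_
    show ρ (1 : Aff K) w = w
    simp
  have hev' : ∀ᶠ b in nhds (0 : K), ∀ w ∈ U, ρ (sS b) w = w := by
    filter_upwards [hev] with b hb
    have : U ≤ LinearMap.ker (ρ (sS b) - LinearMap.id) := by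
      rw [← hF, Submodule.span_le]
      intro w hw
      simp [sub_eq_zero, hb w hw]
    intro w hw
    simpa [sub_eq_zero] using this hw
  intro v hv b
  have ht : Filter.Tendsto (fun l : K => l * b) (nhdsWithin 0 {0}ᶜ) (nhds 0) := by
    have : Filter.Tendsto (fun l : K => l * b) (nhds 0) (nhds (0 * b)) :=
      (continuous_mul_const b).tendsto 0
    rw [zero_mul] at this
    exact this.mono_left nhdsWithin_le_nhds
  obtain ⟨l, hl, hl0⟩ := ((ht.eventually hev').and self_mem_nhdsWithin).exists
  have hl0' : l ≠ 0 := hl0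
  let u : Kˣ := Units.mk0 l hl0'
  have e : xT u⁻¹ * (sS (l * b) * xT u) = sS b := by
    ext
    · simp
    · simp [u, hl0']
  have e3 : xT u⁻¹ * xT u = (1 : Aff K) := by ext <;> simp
  rw [← e, map_mul, map_mul, Module.End.mul_apply, Module.End.mul_apply, hl _ (hU _ _ hv),
    ← Module.End.mul_apply, ← map_mul, e3, map_one, Module.End.one_apply]

lemma step [ProperSpace K] (ρ : Rep K V) (hρ : IsSmoothRep ρ) (A B : Submodule ℂ V)
    (hA : GRep.Invariant ρ A) (hB : GRep.Invariant ρ B) (hAB : A ≤ B)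
    (hmax : ∀ C : Submodule ℂ V, GRep.Invariant ρ C → A ≤ C → C ≤ B → C = A ∨ C = B)
    (hfin : (sInv ρ ⊓ A).FG) : (sInv ρ ⊓ B).FG := by
  by_cases hle : sInv ρ ⊓ B ≤ A
  · have : sInv ρ ⊓ B = sInv ρ ⊓ A :=
      le_antisymm (le_inf inf_le_left hle) (inf_le_inf_left _ hAB)
    rw [this]; exact hfin
  obtain ⟨v, ⟨hvS, hvB⟩, hvA⟩ := SetLike.not_le_iff_exists.1 hle
  let σ : Representation ℂ Kˣ (V ⧸ A) := (GRep.quot ρ A hA).comp xTHom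
  have hσ : ∀ u w, σ u (A.mkQ w) = A.mkQ (ρ (xT u) w) := fun u w => rfl
  let x := A.mkQ v
  have hx : x ≠ 0 := by simpa [x] using hvA
  let E := Submodule.span ℂ (Set.range fun t => σ t x)
  -- everything over the span of the orbit is fixed by S modulo A
  have hE : ∀ b, ∀ y ∈ E, GRep.quot ρ A hA (sS b) y = y := by
    intro b y hy
    have : E ≤ LinearMap.ker (GRep.quot ρ A hA (sS b) - LinearMap.id) := by
      rw [Submodule.span_le]
      rintro _ ⟨t, rfl⟩
      have h1 : ρ (sS b) (ρ (xT t) v) = ρ (xT t) v := sInv_invariant ρ (xT t) v hvS b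
      have h2 : GRep.quot ρ A hA (sS b) (σ t x) = σ t x := by
        show A.mkQ (ρ (sS b) (ρ (xT t) v)) = A.mkQ (ρ (xT t) v)
        rw [h1]
      simp [sub_eq_zero, h2]
    simpa [sub_eq_zero] using this hy
  have hEB : E ≤ B.map A.mkQ := by
    rw [Submodule.span_le]
    rintro _ ⟨t, rfl⟩
    exact ⟨ρ (xT t) v, hB _ _ hvB, rfl⟩
  have key : ∀ C : Submodule ℂ (V ⧸ A), GRep.Invariant σ C → C ≤ E →
      C.comap A.mkQ = A ∨ C.comap A.mkQ = B := by
    intro C hC hCE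
    apply hmax
    · intro g w hw
      have hw' : A.mkQ w ∈ C := hw
      show A.mkQ (ρ g w) ∈ C
      rw [aff_decomp g, map_mul, Module.End.mul_apply, ← hσ]
      apply hC
      have := hE (((g.t⁻¹ : Kˣ) : K) * g.s) _ (hCE hw')
      have h2 : A.mkQ (ρ (sS (((g.t⁻¹ : Kˣ) : K) * g.s)) w) = A.mkQ w := this
      rw [h2]; exact hw'
    · intro a ha
      have : A.mkQ a = 0 := by simpa using ha
      show A.mkQ a ∈ C
      rw [this]; exact C.zero_mem
    · intro w hw
      obtain ⟨b, hb, hbw⟩ := hEB (hCE hw)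
      have : w - b ∈ A := by
        rw [← Submodule.ker_mkQ A, LinearMap.mem_ker, map_sub, hbw, sub_self]
      have := B.add_mem (hAB this) hb
      simpa using this
  have hcount : (Set.range fun t => σ t x).Countable := by
    have := (orbit_countable ρ hρ v).image A.mkQ
    rw [← Set.range_comp] at this
    exact this
  have hEinv : GRep.Invariant σ E := by
    intro t y hy
    have : E ≤ E.comap (σ t) := by
      rw [Submodule.span_le]
      rintro _ ⟨t', rfl⟩
      refine Submodule.subset_span ⟨t * t', ?_⟩
      simp [map_mul]
    exact this hy
  have hsc := orbit_scalar σ x hx hcount (fun C hC hCE => by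
    rcases key C hC hCE with h | h
    · left
      rw [eq_bot_iff]
      intro y hy
      obtain ⟨w, rfl⟩ := A.mkQ_surjective y
      have hw : w ∈ C.comap A.mkQ := hy
      rw [h] at hw
      simpa using hw
    · right
      have : v ∈ C.comap A.mkQ := by rw [h]; exact hvB
      exact this)
  have hE1 : E ≤ Submodule.span ℂ {x} := by
    rw [Submodule.span_le]
    rintro _ ⟨t, rfl⟩
    obtain ⟨z, hz⟩ := hsc t
    simp only [hz]
    exact Submodule.smul_mem _ _ (Submodule.mem_span_singleton_self x)
  have hxE : x ∈ E := Submodule.subset_span ⟨1, by simp⟩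
  have hEeq : E.comap A.mkQ = B := by
    rcases key E hEinv le_rfl with h | h
    · exact absurd (h ▸ (show v ∈ E.comap A.mkQ from hxE)) hvA
    · exact h
  refine Submodule.fg_of_fg_map_of_fg_inf_ker A.mkQ ?_ ?_
  · have hle : (sInv ρ ⊓ B).map A.mkQ ≤ Submodule.span ℂ {x} := by
      rw [Submodule.map_le_iff_le_comap]
      refine inf_le_right.trans ?_
      conv_lhs => rw [← hEeq]
      exact Submodule.comap_mono hE1
    have : FiniteDimensional ℂ ((sInv ρ ⊓ B).map A.mkQ) := Submodule.finiteDimensional_of_le hle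
    exact Module.Finite.iff_fg.1 this
  · rw [Submodule.ker_mkQ, inf_assoc, inf_eq_right.2 hAB]
    exact hfin

end Helpers

section Statements

open Aff

variable {K : Type*} [NontriviallyNormedField K] [IsUltrametricDist K] [ProperSpace K]

theorem statement5
    (hchar : (2 : K) ≠ 0)
    {V : Type*} [AddCommGroup V] [Module ℂ V]
    (ρ : Rep K V) (hρ : IsSmoothRep ρ) (c : CompSeries ρ) :
    (∀ U : Submodule ℂ V, GRep.Invariant ρ U → Module.Finite ℂ ↥U → U ≤ sInv ρ) ∧
    Module.Finite ℂ ↥(sInv ρ) := by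
  refine ⟨fun U hU hfin => part1 ρ hρ U hU hfin, ?_⟩
  have h : ∀ i, i ≤ c.n → (sInv ρ ⊓ c.W i).FG := by
    intro i
    induction i with
    | zero => intro _; rw [c.bot, inf_bot_eq]; exact Submodule.fg_bot
    | succ i ih =>
      intro hi
      exact step ρ hρ _ _ (c.inv i) (c.inv (i + 1)) (c.lt i hi).le
        (c.maximal i hi) (ih (Nat.le_of_succ_le hi))
  have := h c.n le_rfl
  rw [c.top, inf_top_eq] at this
  exact Module.Finite.iff_fg.2 this

end Statements

end PSW
end
end
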